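/- arXiv:2511.01161 — 2 statements merged into one kernel-verified Lean document; each statement's English description precedes it below -/
import Mathlib

section
/- Let n ≥ 1 be an integer, δ ∈ (0, n], p ∈ [1, ∞) and w ∈ A_{p,δ}. Then: (1) for every cube Q of ℝⁿ and every subset E ⊆ Q, (ℋ^δ_∞(E)/ℋ^δ_∞(Q))^p ≤ 2^p · [w]_{A_{p,δ}} · w_{ℋ^δ_∞}(E)/w_{ℋ^δ_∞}(Q); and (2) for every cube Q and every t ∈ [1, ∞), w_{ℋ^δ_∞}(tQ) ≤ 2^p · [w]_{A_{p,δ}} · t^{pδ} · w_{ℋ^δ_∞}(Q), where tQ denotes the cube concentric with Q of side length t·ℓ(Q). -/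
open scoped ENNReal
open Set MeasureTheory

noncomputable section

/-- An axis-parallel cube in `ℝⁿ`, described by its lower corner and positive side length. -/
structure Cube (n : ℕ) where
  corner : Fin n → ℝ
  side : ℝ
  side_pos : 0 < side

namespace Cube

/-- The half-open cube `∏ᵢ [cornerᵢ, cornerᵢ + side)` as a set of points. -/
def toSet {n : ℕ} (Q : Cube n) : Set (Fin n → ℝ) :=
  {x | ∀ i, Q.corner i ≤ x i ∧ x i < Q.corner i + Q.side}

/-- A cube is dyadic if it has the form `2^k·(z + [0,1)ⁿ)` with `k ∈ ℤ`, `z ∈ ℤⁿ`. -/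
def IsDyadic {n : ℕ} (Q : Cube n) : Prop :=
  ∃ (k : ℤ) (z : Fin n → ℤ), Q.side = (2:ℝ) ^ k ∧ ∀ i, Q.corner i = (z i : ℝ) * (2:ℝ) ^ k

/-- `Q'` is a dyadic subcube of `Q`, i.e. obtained from `Q` by repeated bisection. -/
def IsDyadicSubcube {n : ℕ} (Q' Q : Cube n) : Prop :=
  ∃ (k : ℕ) (z : Fin n → ℕ), (∀ i, z i < 2 ^ k) ∧
    Q'.side = Q.side / 2 ^ k ∧ ∀ i, Q'.corner i = Q.corner i + (z i : ℝ) * (Q.side / 2 ^ k)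

/-- The concentric dilate `t·Q` of a cube. -/
def dilate {n : ℕ} (Q : Cube n) (t : ℝ) (ht : 0 < t) : Cube n :=
  ⟨fun i => Q.corner i + Q.side / 2 - t * Q.side / 2, t * Q.side, mul_pos ht Q.side_pos⟩

end Cube

/-- The Hausdorff content `ℋ^δ_∞`. -/
def hContent (n : ℕ) (δ : ℝ) (E : Set (Fin n → ℝ)) : ℝ≥0∞ :=
  ⨅ (Qs : ℕ → Cube n) (_ : E ⊆ ⋃ i, (Qs i).toSet), ∑' i, ENNReal.ofReal ((Qs i).side ^ δ)

/-- The dyadic Hausdorff content `~ℋ^δ_∞`. -/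
def dContent (n : ℕ) (δ : ℝ) (E : Set (Fin n → ℝ)) : ℝ≥0∞ :=
  ⨅ (Qs : ℕ → Cube n) (_ : (∀ i, (Qs i).IsDyadic) ∧ E ⊆ ⋃ i, (Qs i).toSet),
    ∑' i, ENNReal.ofReal ((Qs i).side ^ δ)

/-- The Choquet integral `∫_E f dℋ^δ_∞`. -/
def integH (n : ℕ) (δ : ℝ) (f : (Fin n → ℝ) → ℝ) (E : Set (Fin n → ℝ)) : ℝ≥0∞ :=
  ∫⁻ t in Ioi (0:ℝ), hContent n δ {x | x ∈ E ∧ t < f x}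

/-- The Choquet integral `∫_E f d~ℋ^δ_∞` w.r.t. the dyadic Hausdorff content. -/
def integD (n : ℕ) (δ : ℝ) (f : (Fin n → ℝ) → ℝ) (E : Set (Fin n → ℝ)) : ℝ≥0∞ :=
  ∫⁻ t in Ioi (0:ℝ), dContent n δ {x | x ∈ E ∧ t < f x}

/-- A property holds `ℋ^δ_∞`-a.e. -/
def AEContent (n : ℕ) (δ : ℝ) (P : (Fin n → ℝ) → Prop) : Prop :=
  hContent n δ {x | ¬ P x} = 0

/-- `ℋ^δ_∞`-quasicontinuity. -/
def QuasiCont (n : ℕ) (δ : ℝ) (f : (Fin n → ℝ) → ℝ) : Prop :=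
  ∀ ε : ℝ, 0 < ε → ∃ O : Set (Fin n → ℝ),
    IsOpen O ∧ hContent n δ O < ENNReal.ofReal ε ∧ ContinuousOn f Oᶜ

/-- `L¹_loc(ℝⁿ, ℋ^δ_∞)`. -/
def MemL1loc (n : ℕ) (δ : ℝ) (f : (Fin n → ℝ) → ℝ) : Prop :=
  QuasiCont n δ f ∧ ∀ K : Set (Fin n → ℝ), IsCompact K → integH n δ (fun x => |f x|) K < ⊤

/-- `L^∞(ℝⁿ, ℋ^δ_∞)`. -/
def MemLinf (n : ℕ) (δ : ℝ) (f : (Fin n → ℝ) → ℝ) : Prop :=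
  QuasiCont n δ f ∧ ∃ M : ℝ, AEContent n δ (fun x => |f x| ≤ M)

/-- The `BMO(ℝⁿ, ℋ^δ_∞)` seminorm. -/
def bmoNorm (n : ℕ) (δ : ℝ) (f : (Fin n → ℝ) → ℝ) : ℝ≥0∞ :=
  ⨆ Q : Cube n, ⨅ c : ℝ,
    integH n δ (fun x => |f x - c|) Q.toSet / hContent n δ Q.toSet

/-- Membership in `BMO(ℝⁿ, ℋ^δ_∞)`. -/
def MemBMO (n : ℕ) (δ : ℝ) (f : (Fin n → ℝ) → ℝ) : Prop :=
  MemL1loc n δ f ∧ bmoNorm n δ f < ⊤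

/-- `essinf_{x ∈ Q} f := inf {t ∈ (0,∞) : ℋ^δ_∞({x ∈ Q : f x < t}) > 0}`. -/
def essInfQ (n : ℕ) (δ : ℝ) (f : (Fin n → ℝ) → ℝ) (Q : Cube n) : ℝ :=
  sInf {t : ℝ | 0 < t ∧ 0 < hContent n δ {x | x ∈ Q.toSet ∧ f x < t}}

/-- The `BLO(ℝⁿ, ℋ^δ_∞)` seminorm. -/
def bloNorm (n : ℕ) (δ : ℝ) (f : (Fin n → ℝ) → ℝ) : ℝ≥0∞ :=
  ⨆ Q : Cube n,
    integH n δ (fun x => |f x - essInfQ n δ f Q|) Q.toSet / hContent n δ Q.toSet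

/-- Membership in `BLO(ℝⁿ, ℋ^δ_∞)`. -/
def MemBLO (n : ℕ) (δ : ℝ) (f : (Fin n → ℝ) → ℝ) : Prop :=
  MemL1loc n δ f ∧ bloNorm n δ f < ⊤

/-- A weight: locally Choquet-integrable, quasicontinuous, positive `ℋ^δ_∞`-a.e. -/
def IsWeight (n : ℕ) (δ : ℝ) (w : (Fin n → ℝ) → ℝ) : Prop :=
  MemL1loc n δ w ∧ AEContent n δ (fun x => 0 < w x)

/-- The capacitary Muckenhoupt `A_{p,δ}` constant, for `p > 1`. -/
def apConst (n : ℕ) (δ p : ℝ) (w : (Fin n → ℝ) → ℝ) : ℝ≥0∞ :=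
  ⨆ Q : Cube n,
    (integH n δ w Q.toSet / hContent n δ Q.toSet) *
      (integH n δ (fun x => w x ^ (-(1 / (p - 1)))) Q.toSet / hContent n δ Q.toSet) ^ (p - 1)

/-- Membership in `A_{p,δ}`, `p > 1`. -/
def MemAp (n : ℕ) (δ p : ℝ) (w : (Fin n → ℝ) → ℝ) : Prop :=
  IsWeight n δ w ∧ apConst n δ p w < ⊤

/-- The Hardy–Littlewood maximal operator w.r.t. `ℋ^δ_∞`. -/
def maxOp (n : ℕ) (δ : ℝ) (g : (Fin n → ℝ) → ℝ) (x : Fin n → ℝ) : ℝ≥0∞ :=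
  ⨆ (Q : Cube n) (_ : x ∈ Q.toSet),
    integH n δ (fun y => |g y|) Q.toSet / hContent n δ Q.toSet

/-- The capacitary `A_{1,δ}` constant. -/
def a1Const (n : ℕ) (δ : ℝ) (w : (Fin n → ℝ) → ℝ) : ℝ≥0∞ :=
  sInf {c : ℝ≥0∞ | 0 < c ∧
    AEContent n δ (fun x => maxOp n δ w x ≤ c * ENNReal.ofReal (w x))}

/-- Membership in `A_{1,δ}`. -/
def MemA1 (n : ℕ) (δ : ℝ) (w : (Fin n → ℝ) → ℝ) : Prop :=
  IsWeight n δ w ∧ a1Const n δ w < ⊤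

/-- The `A_{p,δ}` constant for `p ∈ [1,∞)` (it is the `A_{1,δ}` constant when `p = 1`). -/
def apConstGen (n : ℕ) (δ p : ℝ) (w : (Fin n → ℝ) → ℝ) : ℝ≥0∞ :=
  if p = 1 then a1Const n δ w else apConst n δ p w

/-- Membership in `A_{p,δ}` for `p ∈ [1,∞)` (meaning `A_{1,δ}` when `p = 1`). -/
def MemApGen (n : ℕ) (δ p : ℝ) (w : (Fin n → ℝ) → ℝ) : Prop :=
  IsWeight n δ w ∧ apConstGen n δ p w < ⊤

/-- The weighted `BMO^q_w(ℝⁿ, ℋ^δ_∞)` seminorm. -/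
def bmoWNorm (n : ℕ) (δ q : ℝ) (w f : (Fin n → ℝ) → ℝ) : ℝ≥0∞ :=
  ⨆ Q : Cube n, ⨅ c : ℝ,
    (integH n δ (fun x => |f x - c| ^ q * w x) Q.toSet / integH n δ w Q.toSet) ^ (1 / q)

/-- Membership in `BMO^q_w(ℝⁿ, ℋ^δ_∞)`. -/
def MemBMOw (n : ℕ) (δ q : ℝ) (w f : (Fin n → ℝ) → ℝ) : Prop :=
  QuasiCont n δ f ∧
    (∀ K : Set (Fin n → ℝ), IsCompact K → integH n δ (fun x => |f x| ^ q * w x) K < ⊤) ∧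
    bmoWNorm n δ q w f < ⊤

/-- The integral average `f_{Q,δ}` with respect to the dyadic Hausdorff content. -/
def avgQ (n : ℕ) (δ : ℝ) (f : (Fin n → ℝ) → ℝ) (Q : Cube n) : ℝ :=
  ((integD n δ f (Q.toSet ∩ {x | 0 ≤ f x})).toReal -
      (integD n δ (fun x => -f x) (Q.toSet ∩ {x | f x < 0})).toReal) /
    ((dContent n δ (Q.toSet ∩ {x | 0 ≤ f x})).toReal +
      (dContent n δ (Q.toSet ∩ {x | f x < 0})).toReal)

/-!
The Choquet integral is not additive, so Hölder's inequality is replaced by a splitting argument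
valid for every outer measure `μ`. Cut `E` at a level `s` of the weight. By Chebyshev the part where
`w ≥ s` has measure at most `s⁻¹ ∫_E w`, and the part where `w ≤ s` has measure at most
`s ^ (1 / (p - 1)) ∫_E w ^ (-1 / (p - 1))`. If `μ(E) ^ p` exceeded
`2 ^ p (∫_E w) (∫_E w ^ (-1 / (p - 1))) ^ (p - 1)`, some `s` would make both bounds smaller than
`μ(E) / 2`, contradicting subadditivity. For `E ⊆ Q` the `A_p` condition on `Q` then gives (1).
When `p = 1`, the `A_1` condition bounds `w` from below a.e. on `Q` by its mean divided by the
constant, and Chebyshev alone suffices. Since `ℋ(tQ) = t ^ δ ℋ(Q)`, (2) is the case of the subset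
`Q` of `tQ`.
-/

section Choquet

variable {α : Type*} {μ : OuterMeasure α} {f w : α → ℝ} {E F : Set α}

/-- The Choquet integral `∫_E f dμ` of the positive part of `f` with respect to an outer measure,
defined by the layer-cake formula so that no measurability or additivity is needed. -/
def choquetIntegral (μ : OuterMeasure α) (f : α → ℝ) (E : Set α) : ℝ≥0∞ :=
  ∫⁻ t in Ioi (0:ℝ), μ {x | x ∈ E ∧ t < f x}

lemma choquetIntegral_mono_set (h : E ⊆ F) : choquetIntegral μ f E ≤ choquetIntegral μ f F :=
  lintegral_mono fun _ => measure_mono fun _ hx => ⟨h hx.1, hx.2⟩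

lemma ofReal_mul_measure_le_choquetIntegral {a : ℝ} (h : ∀ᵐ x ∂μ, x ∈ E → a ≤ f x) :
    ENNReal.ofReal a * μ E ≤ choquetIntegral μ f E := by
  calc ENNReal.ofReal a * μ E = ∫⁻ _ in Ioo 0 a, μ E := by simp [mul_comm]
    _ ≤ ∫⁻ t in Ioo 0 a, μ {x | x ∈ E ∧ t < f x} := by
        refine setLIntegral_mono' measurableSet_Ioo fun t ht => measure_mono_ae ?_
        filter_upwards [h] with x hx hxE using ⟨hxE, ht.2.trans_le (hx hxE)⟩
    _ ≤ choquetIntegral μ f E := lintegral_mono_set fun _ ht => ht.1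

lemma ofReal_mul_measure_setOf_le_choquetIntegral (a : ℝ) :
    ENNReal.ofReal a * μ {x | x ∈ E ∧ a ≤ f x} ≤ choquetIntegral μ f E :=
  (ofReal_mul_measure_le_choquetIntegral (.of_forall fun _ hx => hx.2)).trans
    (choquetIntegral_mono_set fun _ hx => hx.1)

lemma mul_measure_le_mul_choquetIntegral {a c : ℝ≥0∞} (hc : c ≠ ⊤)
    (h : ∀ᵐ x ∂μ, x ∈ E → a ≤ c * ENNReal.ofReal (f x)) :
    a * μ E ≤ c * choquetIntegral μ f E := by
  rcases eq_or_ne a 0 with rfl | ha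
  · simp
  rcases eq_or_ne (μ E) 0 with hE | hE
  · simp [hE]
  obtain ⟨x₀, hx₀, hax₀⟩ := ((frequently_ae_mem_iff.2 hE).and_eventually h).exists
  have hc0 : c ≠ 0 := by
    rintro rfl
    exact ha (by simpa using hax₀ hx₀)
  have hdiv : a / c ≠ ⊤ :=
    ENNReal.div_ne_top (ne_top_of_le_ne_top (by finiteness) (hax₀ hx₀)) hc0
  have hf : ∀ᵐ x ∂μ, x ∈ E → (a / c).toReal ≤ f x := by
    filter_upwards [h] with x hx hxE
    have hle : a / c ≤ ENNReal.ofReal (f x) := ENNReal.div_le_of_le_mul' (hx hxE)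
    have hfx : 0 < f x := ENNReal.ofReal_pos.1 ((ENNReal.div_pos ha hc).trans_le hle)
    exact ENNReal.toReal_le_of_le_ofReal hfx.le hle
  calc a * μ E = c * (ENNReal.ofReal (a / c).toReal * μ E) := by
        rw [ENNReal.ofReal_toReal hdiv, ← mul_assoc, ENNReal.mul_div_cancel hc0 hc]
    _ ≤ c * choquetIntegral μ f E := by
        gcongr
        exact ofReal_mul_measure_le_choquetIntegral hf

lemma measure_eq_zero_of_choquetIntegral_eq_zero (hf : ∀ᵐ x ∂μ, 0 < f x)
    (h : choquetIntegral μ f E = 0) : μ E = 0 := by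
  have hlevel (m : ℕ) : μ {x | x ∈ E ∧ 1 / ((m : ℝ) + 1) ≤ f x} = 0 := by
    have hle := ofReal_mul_measure_setOf_le_choquetIntegral (μ := μ) (f := f) (E := E)
      (1 / ((m : ℝ) + 1))
    rw [h, nonpos_iff_eq_zero, mul_eq_zero] at hle
    exact hle.resolve_left (ENNReal.ofReal_pos.2 (by positivity)).ne'
  refine measure_mono_null_ae ?_ (measure_iUnion_null hlevel)
  filter_upwards [hf] with x hx hxE
  obtain ⟨m, hm⟩ := exists_nat_one_div_lt hx
  exact mem_iUnion.2 ⟨m, hxE, hm.le⟩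

lemma choquetIntegral_ne_zero (hf : ∀ᵐ x ∂μ, 0 < f x) (hE : μ E ≠ 0) :
    choquetIntegral μ f E ≠ 0 :=
  mt (measure_eq_zero_of_choquetIntegral_eq_zero hf) hE

lemma measure_le_choquetIntegral_div_add {s q : ℝ} (hw : ∀ᵐ x ∂μ, 0 < w x) (hs : 0 < s)
    (hq : 0 ≤ q) :
    μ E ≤ choquetIntegral μ w E / ENNReal.ofReal s +
      ENNReal.ofReal s ^ q * choquetIntegral μ (fun x => w x ^ (-q)) E := by
  have hsplit : μ E ≤ μ {x | x ∈ E ∧ s ≤ w x} + μ {x | x ∈ E ∧ s ^ (-q) ≤ w x ^ (-q)} := by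
    refine (measure_mono_ae ?_).trans (measure_union_le _ _)
    filter_upwards [hw] with x hx hxE
    exact (le_total s (w x)).imp (fun h => ⟨hxE, h⟩)
      fun h => ⟨hxE, Real.rpow_le_rpow_of_nonpos hx h (by linarith)⟩
  refine hsplit.trans (add_le_add ?_ ?_)
  · rw [ENNReal.le_div_iff_mul_le (by simp [hs]) (by simp), mul_comm]
    exact ofReal_mul_measure_setOf_le_choquetIntegral s
  · have hs_ne : ENNReal.ofReal s ^ q ≠ 0 := by
      simp [ENNReal.rpow_eq_zero_iff, hs.not_ge]
    have hcheb := ofReal_mul_measure_setOf_le_choquetIntegral (μ := μ) (E := E)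
      (f := fun x => w x ^ (-q)) (s ^ (-q))
    rwa [← ENNReal.ofReal_rpow_of_pos hs, ENNReal.rpow_neg, mul_comm, ← div_eq_mul_inv,
      ENNReal.div_le_iff' hs_ne (by finiteness)] at hcheb

lemma exists_div_ofReal_lt_and_ofReal_rpow_mul_lt {a b h : ℝ≥0∞} {r : ℝ} (ha : a ≠ 0) (hb : b ≠ 0)
    (hr : 0 < r) (hlt : a * b ^ r < h ^ (r + 1)) :
    ∃ s : ℝ, 0 < s ∧ a / ENNReal.ofReal s < h ∧ ENNReal.ofReal s ^ r⁻¹ * b < h := by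
  have hbr : b ^ r ≠ 0 := mt (ENNReal.rpow_eq_zero_iff_of_pos hr).1 hb
  have hbr_top : b ^ r ≠ ⊤ := fun htop => by simp [htop, ha] at hlt
  have ha_top : a ≠ ⊤ := fun htop => by simp [htop, hbr] at hlt
  have hgap : a / h < (h / b) ^ r := by
    rw [ENNReal.div_rpow_of_nonneg _ _ hr.le, ENNReal.lt_div_iff_mul_lt (.inl hbr) (.inl hbr_top),
      ← ENNReal.mul_div_right_comm, ENNReal.div_lt_iff (.inr (mul_ne_zero ha hbr))
        (.inr (ENNReal.mul_ne_top ha_top hbr_top))]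
    simpa [ENNReal.rpow_add_of_nonneg _ _ hr.le zero_le_one] using hlt
  obtain ⟨s, -, has, hsb⟩ := ENNReal.lt_iff_exists_real_btwn.1 hgap
  refine ⟨s, ENNReal.ofReal_pos.1 (bot_lt_of_lt has), ?_, ENNReal.mul_lt_of_lt_div ?_⟩
  · rw [ENNReal.div_lt_iff (.inr ha) (.inr ha_top)] at has ⊢
    rwa [mul_comm]
  · simpa [ENNReal.rpow_rpow_inv hr.ne'] using ENNReal.rpow_lt_rpow hsb (inv_pos.2 hr)

theorem measure_rpow_le_choquetIntegral_mul {p : ℝ} (hp : 1 < p) (hw : ∀ᵐ x ∂μ, 0 < w x) :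
    μ E ^ p ≤ 2 ^ p * (choquetIntegral μ w E *
      choquetIntegral μ (fun x => w x ^ (-(1 / (p - 1)))) E ^ (p - 1)) := by
  have hp0 : 0 < p := by linarith
  have hp1 : 0 < p - 1 := by linarith
  rw [one_div]
  rcases eq_or_ne (μ E) 0 with hE | hE
  · simp [hE, hp0]
  have hA := choquetIntegral_ne_zero hw hE
  have hB : choquetIntegral μ (fun x => w x ^ (-(p - 1)⁻¹)) E ≠ 0 :=
    choquetIntegral_ne_zero (hw.mono fun _ hx => Real.rpow_pos_of_pos hx _) hE
  by_contra! hlt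
  rw [mul_comm, ← ENNReal.lt_div_iff_mul_lt (.inl (by simp)) (.inl (by finiteness)),
    ← ENNReal.div_rpow_of_nonneg _ _ hp0.le] at hlt
  obtain ⟨s, hs, hupper, hlower⟩ := exists_div_ofReal_lt_and_ofReal_rpow_mul_lt (h := μ E / 2)
    hA hB hp1 (by rwa [sub_add_cancel])
  exact ((measure_le_choquetIntegral_div_add hw hs (inv_pos.2 hp1).le).trans_lt
    (ENNReal.add_lt_add hupper hlower)).ne (ENNReal.add_halves _).symm

end Choquet

section HausdorffContent

variable {n : ℕ} {δ : ℝ}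

lemma Cube.volume_toSet (Q : Cube n) : volume Q.toSet = ENNReal.ofReal (Q.side ^ (n : ℝ)) := by
  have hpi : Q.toSet = univ.pi fun i => Ico (Q.corner i) (Q.corner i + Q.side) := by
    ext x
    simp [Cube.toSet]
  simp [hpi, Real.volume_pi_Ico, ENNReal.ofReal_pow Q.side_pos.le]

lemma Cube.toSet_subset_toSet_dilate (Q : Cube n) {t : ℝ} (ht : 1 ≤ t) :
    Q.toSet ⊆ (Q.dilate t (one_pos.trans_le ht)).toSet := by
  intro x hx i
  have hside : Q.side ≤ t * Q.side := le_mul_of_one_le_left Q.side_pos.le ht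
  constructor <;> simp only [Cube.dilate] <;> linarith [hx i]

lemma hContent_mono {E F : Set (Fin n → ℝ)} (h : E ⊆ F) : hContent n δ E ≤ hContent n δ F :=
  le_iInf₂ fun Qs hQs => iInf₂_le Qs (h.trans hQs)

lemma exists_tsum_side_rpow_lt (hδ : 0 < δ) {ε : ℝ≥0∞} (hε : ε ≠ 0) :
    ∃ Qs : ℕ → Cube n, ∑' i, ENNReal.ofReal ((Qs i).side ^ δ) < ε := by
  obtain ⟨e, he, hsum⟩ := ENNReal.exists_pos_sum_of_countable hε ℕ
  refine ⟨fun i => ⟨0, (e i : ℝ) ^ δ⁻¹, Real.rpow_pos_of_pos (he i) _⟩, ?_⟩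
  simpa [Real.rpow_inv_rpow, hδ.ne'] using hsum

lemma hContent_empty (hδ : 0 < δ) : hContent n δ ∅ = 0 := by
  by_contra h0
  obtain ⟨Qs, hQs⟩ := exists_tsum_side_rpow_lt (n := n) hδ h0
  exact hQs.not_ge (iInf₂_le Qs (empty_subset _))

lemma hContent_iUnion_le (E : ℕ → Set (Fin n → ℝ)) :
    hContent n δ (⋃ k, E k) ≤ ∑' k, hContent n δ (E k) := by
  refine ENNReal.le_of_forall_pos_le_add fun ε hε htop => ?_
  obtain ⟨e, he, hsum⟩ := ENNReal.exists_pos_sum_of_countable (ENNReal.coe_ne_zero.2 hε.ne') ℕ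
  have hcover (k : ℕ) : ∃ Qs : ℕ → Cube n, E k ⊆ ⋃ i, (Qs i).toSet ∧
      ∑' i, ENNReal.ofReal ((Qs i).side ^ δ) < hContent n δ (E k) + e k := by
    have hlt : hContent n δ (E k) < hContent n δ (E k) + e k :=
      ENNReal.lt_add_right (ENNReal.ne_top_of_tsum_ne_top htop.ne k)
        (ENNReal.coe_ne_zero.2 (he k).ne')
    simpa only [hContent, iInf_lt_iff, exists_prop] using hlt
  choose Qs hE hlt using hcover
  have hunion : ⋃ k, E k ⊆ ⋃ j, (Qs (Nat.unpair j).1 (Nat.unpair j).2).toSet :=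
    (iUnion_mono hE).trans (iUnion_unpair fun k i => (Qs k i).toSet).ge
  calc hContent n δ (⋃ k, E k)
      ≤ ∑' j, ENNReal.ofReal ((Qs (Nat.unpair j).1 (Nat.unpair j).2).side ^ δ) :=
        iInf₂_le (fun j => Qs (Nat.unpair j).1 (Nat.unpair j).2) hunion
    _ = ∑' k, ∑' i, ENNReal.ofReal ((Qs k i).side ^ δ) :=
        (Nat.pairEquiv.symm.tsum_eq fun x : ℕ × ℕ =>
          ENNReal.ofReal ((Qs x.1 x.2).side ^ δ)).trans
            (ENNReal.tsum_prod (f := fun k i => ENNReal.ofReal ((Qs k i).side ^ δ)))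
    _ ≤ ∑' k, (hContent n δ (E k) + e k) := ENNReal.tsum_le_tsum fun k => (hlt k).le
    _ ≤ ∑' k, hContent n δ (E k) + ε := by
        rw [ENNReal.tsum_add]
        gcongr

/-- The Hausdorff content `ℋ^δ_∞` as an outer measure. `AEContent` and `integH` are definitionally
its `∀ᵐ` and its `choquetIntegral`, which is how results on outer measures are applied to them. -/
def hausdorffContent (n : ℕ) {δ : ℝ} (hδ : 0 < δ) : OuterMeasure (Fin n → ℝ) where
  measureOf := hContent n δ
  empty := hContent_empty hδ
  mono := hContent_mono
  iUnion_nat E _ := hContent_iUnion_le E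

lemma hContent_toSet_le (hδ : 0 < δ) (Q : Cube n) :
    hContent n δ Q.toSet ≤ ENNReal.ofReal (Q.side ^ δ) := by
  refine ENNReal.le_of_forall_pos_le_add fun ε hε _ => ?_
  obtain ⟨Qs, hQs⟩ := exists_tsum_side_rpow_lt (n := n) hδ (ENNReal.coe_ne_zero.2 hε.ne')
  let cover : ℕ → Cube n := fun | 0 => Q | i + 1 => Qs i
  have hcover : Q.toSet ⊆ ⋃ i, (cover i).toSet := subset_iUnion (fun i => (cover i).toSet) 0
  calc hContent n δ Q.toSet ≤ ∑' i, ENNReal.ofReal ((cover i).side ^ δ) := iInf₂_le cover hcover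
    _ = ENNReal.ofReal (Q.side ^ δ) + ∑' i, ENNReal.ofReal ((Qs i).side ^ δ) :=
        tsum_eq_zero_add' ENNReal.summable
    _ ≤ ENNReal.ofReal (Q.side ^ δ) + ε := by gcongr

lemma ofReal_side_rpow_le_tsum (hδ : 0 ≤ δ) (hδn : δ ≤ n) {Q : Cube n} {Qs : ℕ → Cube n}
    (hQs : Q.toSet ⊆ ⋃ i, (Qs i).toSet) :
    ENNReal.ofReal (Q.side ^ δ) ≤ ∑' i, ENNReal.ofReal ((Qs i).side ^ δ) := by
  by_cases! hlarge : ∃ i, Q.side ≤ (Qs i).side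
  · obtain ⟨i, hi⟩ := hlarge
    refine le_trans ?_ (ENNReal.le_tsum i)
    exact ENNReal.ofReal_le_ofReal (Real.rpow_le_rpow Q.side_pos.le hi hδ)
  have hsplit (P : Cube n) : P.side ^ δ = P.side ^ (δ - n) * P.side ^ (n : ℝ) := by
    rw [← Real.rpow_add P.side_pos, sub_add_cancel]
  have hvol : volume Q.toSet ≤ ∑' i, volume (Qs i).toSet :=
    (measure_mono hQs).trans (measure_iUnion_le _)
  simp only [Cube.volume_toSet] at hvol
  calc ENNReal.ofReal (Q.side ^ δ)
      = ENNReal.ofReal (Q.side ^ (δ - n)) * ENNReal.ofReal (Q.side ^ (n : ℝ)) := by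
        rw [hsplit, ENNReal.ofReal_mul (Real.rpow_nonneg Q.side_pos.le _)]
    _ ≤ ENNReal.ofReal (Q.side ^ (δ - n)) * ∑' i, ENNReal.ofReal ((Qs i).side ^ (n : ℝ)) := by
        gcongr
    _ = ∑' i, ENNReal.ofReal (Q.side ^ (δ - n) * (Qs i).side ^ (n : ℝ)) := by
        simp only [← ENNReal.tsum_mul_left, ENNReal.ofReal_mul (Real.rpow_nonneg Q.side_pos.le _)]
    _ ≤ ∑' i, ENNReal.ofReal ((Qs i).side ^ δ) := by
        refine ENNReal.tsum_le_tsum fun i => ENNReal.ofReal_le_ofReal ?_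
        rw [hsplit (Qs i)]
        gcongr ?_ * _
        · exact Real.rpow_nonneg (Qs i).side_pos.le _
        · exact Real.rpow_le_rpow_of_nonpos (Qs i).side_pos (hlarge i).le (by linarith)

theorem hContent_toSet (hδ : 0 < δ) (hδn : δ ≤ n) (Q : Cube n) :
    hContent n δ Q.toSet = ENNReal.ofReal (Q.side ^ δ) :=
  (hContent_toSet_le hδ Q).antisymm
    (le_iInf₂ fun _ hQs => ofReal_side_rpow_le_tsum hδ.le hδn hQs)

lemma hContent_toSet_ne_zero (hδ : 0 < δ) (hδn : δ ≤ n) (Q : Cube n) :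
    hContent n δ Q.toSet ≠ 0 := by
  rw [hContent_toSet hδ hδn]
  exact (ENNReal.ofReal_pos.2 (Real.rpow_pos_of_pos Q.side_pos δ)).ne'

lemma hContent_toSet_ne_top (hδ : 0 < δ) (Q : Cube n) : hContent n δ Q.toSet ≠ ⊤ :=
  ne_top_of_le_ne_top ENNReal.ofReal_ne_top (hContent_toSet_le hδ Q)

lemma hContent_dilate (hδ : 0 < δ) (hδn : δ ≤ n) (Q : Cube n) {t : ℝ} (ht : 0 < t) :
    hContent n δ (Q.dilate t ht).toSet = ENNReal.ofReal (t ^ δ) * hContent n δ Q.toSet := by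
  rw [hContent_toSet hδ hδn, hContent_toSet hδ hδn, ← ENNReal.ofReal_mul (by positivity),
    ← Real.mul_rpow ht.le Q.side_pos.le, Cube.dilate]

end HausdorffContent

section Muckenhoupt

variable {n : ℕ} {δ p : ℝ} {w : (Fin n → ℝ) → ℝ} {Q : Cube n} {E : Set (Fin n → ℝ)}

lemma integH_mul_integH_rpow_le (hδ : 0 < δ) (hδn : δ ≤ n) (hp : 1 < p) (Q : Cube n) :
    integH n δ w Q.toSet * integH n δ (fun x => w x ^ (-(1 / (p - 1)))) Q.toSet ^ (p - 1) ≤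
      apConst n δ p w * hContent n δ Q.toSet ^ p := by
  have hp1 : 0 < p - 1 := by linarith
  have hQ0 := hContent_toSet_ne_zero hδ hδn Q
  have hQtop := hContent_toSet_ne_top hδ Q
  set W := integH n δ w Q.toSet
  set B := integH n δ (fun x => w x ^ (-(1 / (p - 1)))) Q.toSet
  set H := hContent n δ Q.toSet
  have hH : H ^ p = H * H ^ (p - 1) := by
    simpa using ENNReal.rpow_add 1 (p - 1) hQ0 hQtop
  calc W * B ^ (p - 1) = (W / H * H) * (B / H * H) ^ (p - 1) := by
        simp only [ENNReal.div_mul_cancel hQ0 hQtop]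
    _ = (W / H) * (B / H) ^ (p - 1) * H ^ p := by
        rw [ENNReal.mul_rpow_of_nonneg _ _ hp1.le, hH]
        ring
    _ ≤ apConst n δ p w * H ^ p := by
        gcongr
        exact le_iSup_of_le Q le_rfl

lemma ae_maxOp_le_a1Const_mul (hδ : 0 < δ) (hK : a1Const n δ w < ⊤) :
    AEContent n δ fun x => maxOp n δ w x ≤ a1Const n δ w * ENNReal.ofReal (w x) := by
  obtain ⟨c₀, hc₀, -⟩ := sInf_lt_iff.1 hK
  obtain ⟨c, -, hlim, hc⟩ := exists_seq_tendsto_sInf ⟨c₀, hc₀⟩ (OrderBot.bddBelow _)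
  have hae : ∀ᵐ x ∂hausdorffContent n hδ, ∀ k, maxOp n δ w x ≤ c k * ENNReal.ofReal (w x) :=
    ae_all_iff.2 fun k => (hc k).2
  change ∀ᵐ x ∂hausdorffContent n hδ, _
  filter_upwards [hae] with x hx
  exact ge_of_tendsto' (ENNReal.Tendsto.mul_const hlim (Or.inr ENNReal.ofReal_ne_top)) hx

lemma integH_div_le_maxOp {x : Fin n → ℝ} (hx : x ∈ Q.toSet) :
    integH n δ w Q.toSet / hContent n δ Q.toSet ≤ maxOp n δ w x := by
  refine le_trans ?_ (le_iSup₂_of_le Q hx le_rfl)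
  gcongr
  exact lintegral_mono fun t => hContent_mono fun y hy => ⟨hy.1, hy.2.trans_le (le_abs_self _)⟩

lemma integH_toSet_ne_zero (hδ : 0 < δ) (hδn : δ ≤ n) (hw : AEContent n δ fun x => 0 < w x)
    (Q : Cube n) : integH n δ w Q.toSet ≠ 0 :=
  choquetIntegral_ne_zero (μ := hausdorffContent n hδ) hw (hContent_toSet_ne_zero hδ hδn Q)

lemma integH_toSet_ne_top_of_one_lt (hδ : 0 < δ) (hδn : δ ≤ n) (hp : 1 < p)
    (hw : AEContent n δ fun x => 0 < w x) (hK : apConst n δ p w < ⊤) (Q : Cube n) :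
    integH n δ w Q.toSet ≠ ⊤ := by
  have hB := integH_toSet_ne_zero (w := fun x => w x ^ (-(1 / (p - 1)))) hδ hδn
    (Filter.Eventually.mono (f := ae (hausdorffContent n hδ)) hw
      fun _ hx => Real.rpow_pos_of_pos hx _) Q
  intro htop
  have hle := integH_mul_integH_rpow_le (w := w) hδ hδn hp Q
  have hBp := mt (ENNReal.rpow_eq_zero_iff_of_pos (sub_pos.2 hp)).1 hB
  rw [htop, ENNReal.top_mul hBp, top_le_iff] at hle
  exact ENNReal.mul_ne_top hK.ne
    (ENNReal.rpow_ne_top_of_nonneg (by linarith) (hContent_toSet_ne_top hδ Q)) hle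

lemma integH_toSet_ne_top_of_a1Const_lt_top (hδ : 0 < δ) (hδn : δ ≤ n) (hK : a1Const n δ w < ⊤)
    (Q : Cube n) : integH n δ w Q.toSet ≠ ⊤ := by
  have hQ : hausdorffContent n hδ Q.toSet ≠ 0 := hContent_toSet_ne_zero hδ hδn Q
  obtain ⟨x, hx, hmax⟩ :=
    ((frequently_ae_mem_iff.2 hQ).and_eventually (ae_maxOp_le_a1Const_mul hδ hK)).exists
  intro htop
  have hle := (integH_div_le_maxOp hx).trans hmax
  rw [htop, ENNReal.top_div_of_ne_top (hContent_toSet_ne_top hδ Q), top_le_iff] at hle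
  exact ENNReal.mul_ne_top hK.ne ENNReal.ofReal_ne_top hle

lemma integH_toSet_ne_top (hδ : 0 < δ) (hδn : δ ≤ n) (hp : 1 ≤ p)
    (hw : AEContent n δ fun x => 0 < w x) (hK : apConstGen n δ p w < ⊤) (Q : Cube n) :
    integH n δ w Q.toSet ≠ ⊤ := by
  rcases hp.eq_or_lt with rfl | hp
  · exact integH_toSet_ne_top_of_a1Const_lt_top hδ hδn (by simpa [apConstGen] using hK) Q
  · exact integH_toSet_ne_top_of_one_lt hδ hδn hp hw (by simpa [apConstGen, hp.ne'] using hK) Q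

lemma hContent_mul_integH_le_a1Const (hδ : 0 < δ) (hδn : δ ≤ n) (hK : a1Const n δ w < ⊤)
    (hE : E ⊆ Q.toSet) :
    hContent n δ E * integH n δ w Q.toSet ≤
      a1Const n δ w * integH n δ w E * hContent n δ Q.toSet := by
  have hQ0 := hContent_toSet_ne_zero hδ hδn Q
  have hQtop := hContent_toSet_ne_top hδ Q
  have hae : ∀ᵐ x ∂hausdorffContent n hδ, x ∈ E →
      integH n δ w Q.toSet / hContent n δ Q.toSet ≤ a1Const n δ w * ENNReal.ofReal (w x) :=
    Filter.Eventually.mono (ae_maxOp_le_a1Const_mul hδ hK)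
      fun x hx hxE => (integH_div_le_maxOp (hE hxE)).trans hx
  have hmean : integH n δ w Q.toSet / hContent n δ Q.toSet * hContent n δ E ≤
      a1Const n δ w * integH n δ w E :=
    mul_measure_le_mul_choquetIntegral hK.ne hae
  rwa [← ENNReal.div_le_iff hQ0 hQtop, mul_comm, ENNReal.mul_div_right_comm]

lemma hContent_rpow_mul_integH_le_apConst (hδ : 0 < δ) (hδn : δ ≤ n) (hp : 1 < p)
    (hw : AEContent n δ fun x => 0 < w x) (hE : E ⊆ Q.toSet) :
    hContent n δ E ^ p * integH n δ w Q.toSet ≤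
      2 ^ p * apConst n δ p w * integH n δ w E * hContent n δ Q.toSet ^ p := by
  set σ : (Fin n → ℝ) → ℝ := fun x => w x ^ (-(1 / (p - 1)))
  have hhoelder : hContent n δ E ^ p ≤ 2 ^ p * (integH n δ w E * integH n δ σ E ^ (p - 1)) :=
    measure_rpow_le_choquetIntegral_mul (μ := hausdorffContent n hδ) hp hw
  have hσ : integH n δ σ E ≤ integH n δ σ Q.toSet :=
    choquetIntegral_mono_set (μ := hausdorffContent n hδ) hE
  calc hContent n δ E ^ p * integH n δ w Q.toSet
      ≤ 2 ^ p * (integH n δ w E * integH n δ σ Q.toSet ^ (p - 1)) * integH n δ w Q.toSet := by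
        have := sub_nonneg.2 hp.le
        gcongr
        exact hhoelder.trans (by gcongr)
    _ = 2 ^ p * integH n δ w E * (integH n δ w Q.toSet * integH n δ σ Q.toSet ^ (p - 1)) := by
        ring
    _ ≤ 2 ^ p * integH n δ w E * (apConst n δ p w * hContent n δ Q.toSet ^ p) := by
        gcongr 2 ^ p * integH n δ w E * ?_
        exact integH_mul_integH_rpow_le hδ hδn hp Q
    _ = 2 ^ p * apConst n δ p w * integH n δ w E * hContent n δ Q.toSet ^ p := by ring

theorem hContent_rpow_mul_integH_le (hδ : 0 < δ) (hδn : δ ≤ n) (hp : 1 ≤ p)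
    (hw : AEContent n δ fun x => 0 < w x) (hK : apConstGen n δ p w < ⊤) (hE : E ⊆ Q.toSet) :
    hContent n δ E ^ p * integH n δ w Q.toSet ≤
      2 ^ p * apConstGen n δ p w * integH n δ w E * hContent n δ Q.toSet ^ p := by
  rcases hp.eq_or_lt with rfl | hp
  · simp only [apConstGen, if_true, ENNReal.rpow_one] at hK ⊢
    refine (hContent_mul_integH_le_a1Const hδ hδn hK hE).trans ?_
    gcongr
    exact le_mul_of_one_le_left bot_le one_le_two
  · simp only [apConstGen, if_neg hp.ne']
    exact hContent_rpow_mul_integH_le_apConst hδ hδn hp hw hE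

theorem hContent_div_rpow_le (hδ : 0 < δ) (hδn : δ ≤ n) (hp : 1 ≤ p)
    (hw : AEContent n δ fun x => 0 < w x) (hK : apConstGen n δ p w < ⊤) (hE : E ⊆ Q.toSet) :
    (hContent n δ E / hContent n δ Q.toSet) ^ p ≤
      2 ^ p * apConstGen n δ p w * (integH n δ w E / integH n δ w Q.toSet) := by
  have hp0 : 0 < p := by linarith
  have hQ0 : hContent n δ Q.toSet ^ p ≠ 0 :=
    mt (ENNReal.rpow_eq_zero_iff_of_pos hp0).1 (hContent_toSet_ne_zero hδ hδn Q)
  have hQtop : hContent n δ Q.toSet ^ p ≠ ⊤ :=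
    ENNReal.rpow_ne_top_of_nonneg hp0.le (hContent_toSet_ne_top hδ Q)
  rw [ENNReal.div_rpow_of_nonneg _ _ hp0.le, ENNReal.div_le_iff hQ0 hQtop, ← mul_div_assoc,
    ← ENNReal.mul_div_right_comm,
    ENNReal.le_div_iff_mul_le (.inl (integH_toSet_ne_zero hδ hδn hw Q))
      (.inl (integH_toSet_ne_top hδ hδn hp hw hK Q))]
  exact hContent_rpow_mul_integH_le hδ hδn hp hw hK hE

theorem integH_dilate_le (hδ : 0 < δ) (hδn : δ ≤ n) (hp : 1 ≤ p)
    (hw : AEContent n δ fun x => 0 < w x) (hK : apConstGen n δ p w < ⊤) (Q : Cube n) {t : ℝ}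
    (ht : 1 ≤ t) :
    integH n δ w (Q.dilate t (one_pos.trans_le ht)).toSet ≤
      2 ^ p * apConstGen n δ p w * ENNReal.ofReal (t ^ (p * δ)) * integH n δ w Q.toSet := by
  have hp0 : 0 < p := by linarith
  have ht0 : 0 < t := by linarith
  have hQ0 : hContent n δ Q.toSet ^ p ≠ 0 :=
    mt (ENNReal.rpow_eq_zero_iff_of_pos hp0).1 (hContent_toSet_ne_zero hδ hδn Q)
  have hQtop : hContent n δ Q.toSet ^ p ≠ ⊤ :=
    ENNReal.rpow_ne_top_of_nonneg hp0.le (hContent_toSet_ne_top hδ Q)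
  have hscale : ENNReal.ofReal (t ^ δ) ^ p = ENNReal.ofReal (t ^ (p * δ)) := by
    rw [ENNReal.ofReal_rpow_of_pos (Real.rpow_pos_of_pos ht0 δ), ← Real.rpow_mul ht0.le, mul_comm]
  have hmain := hContent_rpow_mul_integH_le hδ hδn hp hw hK (Q.toSet_subset_toSet_dilate ht)
  rw [hContent_dilate hδ hδn, ENNReal.mul_rpow_of_nonneg _ _ hp0.le, hscale] at hmain
  rw [← ENNReal.mul_le_mul_iff_right hQ0 hQtop]
  exact hmain.trans_eq (by ring)

end Muckenhoupt

theorem stmt15_general {n : ℕ} {δ p : ℝ} (hδ : 0 < δ) (hδn : δ ≤ n) (hp : 1 ≤ p)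
    {w : (Fin n → ℝ) → ℝ} (hw : AEContent n δ fun x => 0 < w x) (hK : apConstGen n δ p w < ⊤) :
    (∀ Q : Cube n, ∀ E : Set (Fin n → ℝ), E ⊆ Q.toSet →
      (hContent n δ E / hContent n δ Q.toSet) ^ p ≤
        (2 : ℝ≥0∞) ^ p * apConstGen n δ p w *
          (integH n δ w E / integH n δ w Q.toSet)) ∧
    ∀ Q : Cube n, ∀ t : ℝ, ∀ ht : 1 ≤ t,
      integH n δ w (Q.dilate t (lt_of_lt_of_le one_pos ht)).toSet ≤
        (2 : ℝ≥0∞) ^ p * apConstGen n δ p w * ENNReal.ofReal (t ^ (p * δ)) *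
          integH n δ w Q.toSet :=
  ⟨fun _ _ hE => hContent_div_rpow_le hδ hδn hp hw hK hE,
    fun Q _ ht => integH_dilate_le hδ hδn hp hw hK Q ht⟩


/-- doubling properties of capacitary Muckenhoupt weights. -/
theorem stmt15 (n : ℕ) (hn : 1 ≤ n) (δ p : ℝ) (hδ0 : 0 < δ) (hδn : δ ≤ n) (hp : 1 ≤ p)
    (w : (Fin n → ℝ) → ℝ) (hw : MemApGen n δ p w) :
    (∀ Q : Cube n, ∀ E : Set (Fin n → ℝ), E ⊆ Q.toSet →
      (hContent n δ E / hContent n δ Q.toSet) ^ p ≤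
        (2 : ℝ≥0∞) ^ p * apConstGen n δ p w *
          (integH n δ w E / integH n δ w Q.toSet)) ∧
    ∀ Q : Cube n, ∀ t : ℝ, ∀ ht : 1 ≤ t,
      integH n δ w (Q.dilate t (lt_of_lt_of_le one_pos ht)).toSet ≤
        (2 : ℝ≥0∞) ^ p * apConstGen n δ p w * ENNReal.ofReal (t ^ (p * δ)) *
          integH n δ w Q.toSet :=
  stmt15_general hδ0 hδn hp hw.1.2 hw.2
end
end

section
/- Let n ≥ 1 be an integer, δ ∈ (0, n], and let f : ℝⁿ → [0, ∞) be a non-negative, ℋ^δ_∞-quasicontinuous function with ∫_{ℝⁿ} f d\~ℋ^δ_∞ < ∞. Then for \~ℋ^δ_∞-a.e. x ∈ ℝⁿ, the averages (1/\~ℋ^δ_∞(Q)) ∫_Q f d\~ℋ^δ_∞ converge to f(x) as Q → x, i.e., for every ε > 0 there is r > 0 such that |(1/\~ℋ^δ_∞(Q)) ∫_Q f d\~ℋ^δ_∞ − f(x)| < ε for every cube Q containing x with side length ℓ(Q) < r. -/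
open scoped ENNReal
open Set MeasureTheory

noncomputable section

open Filter Metric
open scoped Topology

/-! The classical proof of Lebesgue's theorem, with a maximal inequality in place of additivity.
Quasicontinuity makes `f` continuous off a set `O` of small content. If the content of `Q ∩ O` and
`∫_{Q ∩ O} f` are small compared with the content of `Q`, then the average of `f` over `Q` is close
to the value of `f` at any point of `Q \ O`, once `Q` is small. The points lying in cubes for which
this smallness fails form a set of small content: cover `O` and the superlevel sets of `f` on `O` by
dyadic cubes, put the mass `ℓ(P) ^ δ` at the corner of each cube `P` of the cover, and apply the
Vitali covering lemma to the resulting measure. Here `∫_O f` is small because the Choquet integral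
is absolutely continuous. -/

section Choquet

variable {α : Type*} {m : Set α → ℝ≥0∞} {f : α → ℝ} {E O : Set α} {a c ε κ : ℝ}

/-- The Choquet integral over `E` of the positive part of `f` with respect to an arbitrary set
function `m`; for `m = dContent n δ` it is `integD`. -/
def choquet (m : Set α → ℝ≥0∞) (f : α → ℝ) (E : Set α) : ℝ≥0∞ :=
  ∫⁻ t in Ioi (0 : ℝ), m {x | x ∈ E ∧ t < f x}

theorem lintegral_Ioi_zero_eq_tsum_lintegral_Ioc (g : ℝ → ℝ≥0∞) :
    ∫⁻ t in Ioi 0, g t = ∑' k : ℕ, ∫⁻ t in Ioc (k : ℝ) (k + 1), g t := by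
  have union : ⋃ k : ℕ, Ioc (k : ℝ) (k + 1) = Ioi 0 := by
    simpa using iUnion_Ioc_map_succ_eq_Ioi (f := ((↑) : ℕ → ℝ)) (fun k => by simp)
      (not_bddAbove_iff.2 fun x => by simpa using exists_nat_gt x)
  have disjoint : Pairwise (Function.onFun Disjoint fun k : ℕ => Ioc (k : ℝ) (k + 1)) := by
    simpa using (Nat.mono_cast (α := ℝ)).pairwise_disjoint_on_Ioc_succ
  rw [← union, lintegral_iUnion (fun _ => measurableSet_Ioc) disjoint]

theorem lintegral_Ioi_zero_le_tsum_of_antitone {g : ℝ → ℝ≥0∞} (hg : Antitone g) :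
    ∫⁻ t in Ioi 0, g t ≤ ∑' k : ℕ, g k := by
  rw [lintegral_Ioi_zero_eq_tsum_lintegral_Ioc]
  refine ENNReal.tsum_le_tsum fun k => ?_
  calc ∫⁻ t in Ioc (k : ℝ) (k + 1), g t ≤ ∫⁻ _ in Ioc (k : ℝ) (k + 1), g k :=
        setLIntegral_mono' measurableSet_Ioc fun t ht => hg ht.1.le
    _ = g k := by simp

theorem tsum_le_add_lintegral_Ioi_zero_of_antitone {g : ℝ → ℝ≥0∞} (hg : Antitone g) :
    ∑' k : ℕ, g k ≤ g 0 + ∫⁻ t in Ioi 0, g t := by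
  rw [tsum_eq_zero_add' ENNReal.summable, lintegral_Ioi_zero_eq_tsum_lintegral_Ioc, Nat.cast_zero]
  gcongr with k
  calc g (k + 1 : ℕ) = ∫⁻ _ in Ioc (k : ℝ) (k + 1), g (k + 1 : ℕ) := by simp
    _ ≤ ∫⁻ t in Ioc (k : ℝ) (k + 1), g t :=
        setLIntegral_mono' measurableSet_Ioc fun t ht => hg (by simpa using ht.2)

theorem antitone_superlevel (hm : Monotone m) (f : α → ℝ) (E : Set α) :
    Antitone fun t : ℝ => m {x | x ∈ E ∧ t < f x} :=
  fun _ _ hst => hm fun _ hx => ⟨hx.1, hst.trans_lt hx.2⟩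

theorem choquet_le_tsum (hm : Monotone m) (f : α → ℝ) (E : Set α) :
    choquet m f E ≤ ∑' k : ℕ, m {x | x ∈ E ∧ k < f x} :=
  lintegral_Ioi_zero_le_tsum_of_antitone (antitone_superlevel hm f E)

theorem tsum_le_add_choquet (hm : Monotone m) (f : α → ℝ) (E : Set α) :
    ∑' k : ℕ, m {x | x ∈ E ∧ k < f x} ≤ m E + choquet m f E :=
  (tsum_le_add_lintegral_Ioi_zero_of_antitone (antitone_superlevel hm f E)).trans
    (add_le_add_left (hm fun _ hx => hx.1) _)

theorem ofReal_mul_le_choquet (hm : Monotone m) (f : α → ℝ) (E : Set α) (c : ℝ) :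
    ENNReal.ofReal c * m {x | x ∈ E ∧ c ≤ f x} ≤ choquet m f E :=
  calc ENNReal.ofReal c * m {x | x ∈ E ∧ c ≤ f x}
      = ∫⁻ _ in Ioo 0 c, m {x | x ∈ E ∧ c ≤ f x} := by
        rw [setLIntegral_const, Real.volume_Ioo, sub_zero, mul_comm]
    _ ≤ ∫⁻ t in Ioo 0 c, m {x | x ∈ E ∧ t < f x} :=
        setLIntegral_mono' measurableSet_Ioo fun t ht =>
          hm fun x hx => ⟨hx.1, ht.2.trans_le hx.2⟩
    _ ≤ choquet m f E := lintegral_mono_set fun t ht => ht.1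

theorem choquet_le_of_forall_le (hm : Monotone m) (h : ∀ y ∈ E \ O, f y ≤ c) :
    choquet m f E ≤ ENNReal.ofReal c * m E + choquet m f (E ∩ O) := by
  have level_le : ∀ t ∈ Ioi (0 : ℝ), m {x | x ∈ E ∧ t < f x} ≤
      (Ioc 0 c).indicator (fun _ => m E) t + m {x | x ∈ E ∩ O ∧ t < f x} := by
    intro t ht
    rcases le_or_gt t c with htc | hct
    · rw [indicator_of_mem (show t ∈ Ioc 0 c from ⟨ht, htc⟩)]
      exact (hm fun x hx => hx.1).trans le_self_add
    · have subset : {x | x ∈ E ∧ t < f x} ⊆ {x | x ∈ E ∩ O ∧ t < f x} := fun x hx =>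
        ⟨⟨hx.1, by_contra fun hxO => (h x ⟨hx.1, hxO⟩).not_gt (hct.trans hx.2)⟩, hx.2⟩
      exact (hm subset).trans le_add_self
  calc choquet m f E
      ≤ ∫⁻ t in Ioi (0 : ℝ),
          ((Ioc 0 c).indicator (fun _ => m E) t + m {x | x ∈ E ∩ O ∧ t < f x}) :=
        setLIntegral_mono' measurableSet_Ioi level_le
    _ = (∫⁻ t in Ioi (0 : ℝ), (Ioc 0 c).indicator (fun _ => m E) t) + choquet m f (E ∩ O) :=
        lintegral_add_left (measurable_const.indicator measurableSet_Ioc) _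
    _ ≤ (∫⁻ t, (Ioc 0 c).indicator (fun _ => m E) t) + choquet m f (E ∩ O) :=
        add_le_add (setLIntegral_le_lintegral _ _) le_rfl
    _ = ENNReal.ofReal c * m E + choquet m f (E ∩ O) := by
        rw [lintegral_indicator measurableSet_Ioc, setLIntegral_const, Real.volume_Ioc, sub_zero,
          mul_comm]

theorem ofReal_mul_le_choquet_add (hm : Monotone m) (hsub : ∀ A B, m (A ∪ B) ≤ m A + m B)
    (h : ∀ y ∈ E \ O, c ≤ f y) :
    ENNReal.ofReal c * m E ≤ choquet m f E + ENNReal.ofReal c * m (E ∩ O) := by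
  have subset : E ⊆ {x | x ∈ E ∧ c ≤ f x} ∪ E ∩ O := fun y hy =>
    (em (y ∈ O)).elim (fun hyO => .inr ⟨hy, hyO⟩) fun hyO => .inl ⟨hy, h y ⟨hy, hyO⟩⟩
  calc ENNReal.ofReal c * m E
      ≤ ENNReal.ofReal c * (m {x | x ∈ E ∧ c ≤ f x} + m (E ∩ O)) := by
        gcongr
        exact (hm subset).trans (hsub _ _)
    _ ≤ choquet m f E + ENNReal.ofReal c * m (E ∩ O) := by
        rw [mul_add]
        gcongr
        exact ofReal_mul_le_choquet hm f E c

theorem abs_choquet_div_sub_le (hm : Monotone m) (hsub : ∀ A B, m (A ∪ B) ≤ m A + m B)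
    (hE₀ : m E ≠ 0) (hE : m E ≠ ⊤) (ha : 0 ≤ a) (hε : 0 ≤ ε) (hκ : 0 ≤ κ)
    (hf : ∀ y ∈ E \ O, |f y - a| ≤ ε)
    (hO : m (E ∩ O) + choquet m f (E ∩ O) ≤ ENNReal.ofReal κ * m E) :
    |(choquet m f E / m E).toReal - a| ≤ ε + κ + a * κ := by
  have upper : choquet m f E / m E ≤ ENNReal.ofReal (a + ε + κ) := by
    rw [ENNReal.div_le_iff hE₀ hE, ENNReal.ofReal_add (by positivity) hκ, add_mul]
    refine (choquet_le_of_forall_le hm fun y hy => ?_).trans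
      (add_le_add_right (le_add_self.trans hO) _)
    linarith [(abs_le.1 (hf y hy)).2]
  have lower : ENNReal.ofReal (a - ε) ≤ choquet m f E / m E + ENNReal.ofReal (a * κ) := by
    rw [← ENNReal.mul_le_mul_iff_left hE₀ hE, add_mul, ENNReal.div_mul_cancel hE₀ hE,
      ENNReal.ofReal_mul ha, mul_assoc]
    refine (ofReal_mul_le_choquet_add (f := f) hm hsub (O := O) fun y hy => ?_).trans ?_
    · linarith [(abs_le.1 (hf y hy)).1]
    · gcongr
      · linarith
      · exact le_self_add.trans hO
  have ne_top : choquet m f E / m E ≠ ⊤ := ne_top_of_le_ne_top ENNReal.ofReal_ne_top upper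
  have upper_real := ENNReal.toReal_le_of_le_ofReal (by positivity) upper
  rw [← ENNReal.ofReal_toReal ne_top, ← ENNReal.ofReal_add ENNReal.toReal_nonneg (by positivity),
    ENNReal.ofReal_le_ofReal_iff (by positivity)] at lower
  rw [abs_le]
  constructor <;> nlinarith [mul_nonneg ha hκ]

theorem exists_pos_choquet_le_of_le (hm : Monotone m) (hf : choquet m f univ ≠ ⊤) {ε : ℝ≥0∞}
    (hε : ε ≠ 0) : ∃ η > 0, ∀ O, m O ≤ η → choquet m f O ≤ ε := by
  let g : ℝ → ℝ≥0∞ := fun t => m {x | x ∈ univ ∧ t < f x}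
  have hg : Measurable g := (antitone_superlevel hm f univ).measurable
  have tendsto_zero : Tendsto (fun η => ∫⁻ t in Ioi (0 : ℝ), min η (g t)) (𝓝 0) (𝓝 0) := by
    have := tendsto_lintegral_filter_of_dominated_convergence
      (μ := volume.restrict (Ioi (0 : ℝ))) (l := 𝓝 (0 : ℝ≥0∞)) (F := fun η t => min η (g t))
      (f := 0) g (.of_forall fun η => measurable_const.min hg)
      (.of_forall fun η => .of_forall fun t => min_le_right _ _) hf
      (.of_forall fun t => by
        simpa using (tendsto_id (x := 𝓝 (0 : ℝ≥0∞))).min (tendsto_const_nhds (x := g t)))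
    simpa using this
  obtain ⟨η, hη, hle⟩ := ENNReal.nhds_zero_basis_Iic.eventually_iff.1
    (tendsto_zero.eventually (ge_mem_nhds (pos_iff_ne_zero.2 hε)))
  refine ⟨η, hη, fun O hO => le_trans (lintegral_mono fun t => le_min ?_ ?_) (hle self_mem_Iic)⟩
  · exact (hm fun x hx => hx.1).trans hO
  · exact hm fun x hx => ⟨trivial, hx.2⟩

end Choquet

namespace Cube

variable {n : ℕ} {δ : ℝ}

theorem corner_mem_toSet (Q : Cube n) : Q.corner ∈ Q.toSet :=
  fun _ => ⟨le_rfl, lt_add_of_pos_right _ Q.side_pos⟩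

theorem dist_le_side (Q : Cube n) {x y : Fin n → ℝ} (hx : x ∈ Q.toSet) (hy : y ∈ Q.toSet) :
    dist x y ≤ Q.side := by
  refine (dist_pi_le_iff Q.side_pos.le).2 fun i => ?_
  rw [Real.dist_eq, abs_le]
  constructor <;> linarith [(hx i).1, (hx i).2, (hy i).1, (hy i).2]

theorem volume_toSet_s16 (Q : Cube n) : volume Q.toSet = ENNReal.ofReal (Q.side ^ n) := by
  have toSet_eq_pi : Q.toSet = univ.pi fun i => Ico (Q.corner i) (Q.corner i + Q.side) := by
    ext x
    simp [toSet]
  simp [toSet_eq_pi, Real.volume_pi_Ico, ENNReal.ofReal_pow Q.side_pos.le]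

theorem ofReal_side_rpow_le_tsum {ι : Type*} [Countable ι] (hδ₀ : 0 ≤ δ) (hδn : δ ≤ n) (Q : Cube n)
    {P : ι → Cube n} (hQ : Q.toSet ⊆ ⋃ i, (P i).toSet) :
    ENNReal.ofReal (Q.side ^ δ) ≤ ∑' i, ENNReal.ofReal ((P i).side ^ δ) := by
  have hs := Q.side_pos
  by_cases hlarge : ∃ i, Q.side ≤ (P i).side
  · obtain ⟨i, hi⟩ := hlarge
    exact (ENNReal.ofReal_le_ofReal (Real.rpow_le_rpow hs.le hi hδ₀)).trans (ENNReal.le_tsum i)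
  push Not at hlarge
  have rpow_split (R : Cube n) : R.side ^ n = R.side ^ δ * R.side ^ ((n : ℝ) - δ) := by
    rw [← Real.rpow_add R.side_pos, add_sub_cancel, Real.rpow_natCast]
  have scaled : ENNReal.ofReal (Q.side ^ δ) * ENNReal.ofReal (Q.side ^ ((n : ℝ) - δ)) ≤
      (∑' i, ENNReal.ofReal ((P i).side ^ δ)) * ENNReal.ofReal (Q.side ^ ((n : ℝ) - δ)) :=
    calc ENNReal.ofReal (Q.side ^ δ) * ENNReal.ofReal (Q.side ^ ((n : ℝ) - δ))
        = volume Q.toSet := by rw [volume_toSet_s16, rpow_split, ENNReal.ofReal_mul (by positivity)]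
      _ ≤ ∑' i, volume (P i).toSet := (measure_mono hQ).trans (measure_iUnion_le _)
      _ ≤ ∑' i, ENNReal.ofReal ((P i).side ^ δ) * ENNReal.ofReal (Q.side ^ ((n : ℝ) - δ)) := by
          refine ENNReal.tsum_le_tsum fun i => ?_
          have hi := (P i).side_pos
          rw [volume_toSet_s16, rpow_split, ENNReal.ofReal_mul (by positivity)]
          gcongr
          exact (hlarge i).le
      _ = _ := ENNReal.tsum_mul_right
  have factor_pos : 0 < Q.side ^ ((n : ℝ) - δ) := by positivity
  exact (ENNReal.mul_le_mul_iff_left (by simpa using factor_pos) ENNReal.ofReal_ne_top).1 scaled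

/-- The dyadic cube `2 ^ k • (z + [0, 1)ⁿ)`. -/
def dyadic (k : ℤ) (z : Fin n → ℤ) : Cube n :=
  ⟨fun i => z i * (2 : ℝ) ^ k, 2 ^ k, by positivity⟩

theorem isDyadic_dyadic (k : ℤ) (z : Fin n → ℤ) : (dyadic k z).IsDyadic :=
  ⟨k, z, rfl, fun _ => rfl⟩

theorem mem_dyadic_iff {k : ℤ} {z : Fin n → ℤ} {x : Fin n → ℝ} :
    x ∈ (dyadic k z).toSet ↔ ∀ i, ⌊x i / 2 ^ k⌋ = z i := by
  have hpos : (0 : ℝ) < 2 ^ k := by positivity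
  refine forall_congr' fun i => ?_
  rw [Int.floor_eq_iff, le_div_iff₀ hpos, div_lt_iff₀ hpos, add_one_mul]
  rfl

theorem toSet_subset_biUnion_dyadic (Q : Cube n) {k : ℤ} (hk : Q.side ≤ 2 ^ k) :
    Q.toSet ⊆ ⋃ z ∈ Finset.Icc (fun i => ⌊Q.corner i / 2 ^ k⌋)
      (fun i => ⌊Q.corner i / 2 ^ k⌋ + 1), (dyadic k z).toSet := by
  intro y hy
  have hpos : (0 : ℝ) < 2 ^ k := by positivity
  refine mem_iUnion₂.2 ⟨fun i => ⌊y i / 2 ^ k⌋, Finset.mem_Icc.2 ⟨fun i => ?_, fun i => ?_⟩,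
    mem_dyadic_iff.2 fun i => rfl⟩
  · exact Int.floor_le_floor (by gcongr; exact (hy i).1)
  · change ⌊y i / 2 ^ k⌋ ≤ ⌊Q.corner i / 2 ^ k⌋ + 1
    rw [← Int.floor_add_one, div_add_one hpos.ne']
    exact Int.floor_le_floor (by gcongr; linarith [(hy i).2])

end Cube

section DyadicContent

variable {n : ℕ} {δ : ℝ}

theorem exists_isDyadic_tsum_lt (n : ℕ) (hδ : 0 < δ) {ε : ℝ≥0∞} (hε : ε ≠ 0) :
    ∃ Q : ℕ → Cube n, (∀ i, (Q i).IsDyadic) ∧ ∑' i, ENNReal.ofReal ((Q i).side ^ δ) < ε := by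
  have side_tendsto : Tendsto (fun j : ℕ => ENNReal.ofReal ((((1 : ℝ) / 2) ^ j) ^ δ)) atTop
      (𝓝 0) := by
    simpa [Real.zero_rpow hδ.ne'] using ENNReal.tendsto_ofReal
      ((tendsto_pow_atTop_nhds_zero_of_lt_one (by norm_num : (0 : ℝ) ≤ 1 / 2)
        (by norm_num)).rpow_const (.inr hδ.le))
  have exists_small (e : ℝ≥0∞) (he : 0 < e) :
      ∃ Q : Cube n, Q.IsDyadic ∧ ENNReal.ofReal (Q.side ^ δ) < e := by
    obtain ⟨j, hj⟩ := (side_tendsto.eventually (gt_mem_nhds he)).exists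
    exact ⟨Cube.dyadic (-j) 0, Cube.isDyadic_dyadic _ _, by simpa [Cube.dyadic] using hj⟩
  obtain ⟨e, he, hsum⟩ := ENNReal.exists_pos_sum_of_countable' hε ℕ
  choose Q hQ hlt using fun i => exists_small (e i) (he i)
  exact ⟨Q, hQ, (ENNReal.tsum_le_tsum fun i => (hlt i).le).trans_lt hsum⟩

-- `dContent` only admits covers indexed by `ℕ`, so a finite cover is padded by tiny cubes.
theorem dContent_le_tsum {ι : Type*} [Countable ι] (hδ : 0 < δ) {E : Set (Fin n → ℝ)}
    {P : ι → Cube n} (hP : ∀ i, (P i).IsDyadic) (hE : E ⊆ ⋃ i, (P i).toSet) :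
    dContent n δ E ≤ ∑' i, ENNReal.ofReal ((P i).side ^ δ) := by
  refine le_of_forall_pos_le_add fun ε hε => ?_
  obtain ⟨R, hR, hsum⟩ := exists_isDyadic_tsum_lt n hδ hε.ne'
  obtain ⟨e⟩ : Nonempty (ℕ ≃ ι ⊕ ℕ) := nonempty_equiv_of_countable
  have isDyadic (s : ι ⊕ ℕ) : (Sum.elim P R s).IsDyadic := by
    rcases s with i | j
    exacts [hP i, hR j]
  have cover : E ⊆ ⋃ i, (Sum.elim P R (e i)).toSet := by
    rw [e.surjective.iUnion_comp fun s => (Sum.elim P R s).toSet, iUnion_sum]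
    exact hE.trans subset_union_left
  calc dContent n δ E ≤ ∑' i, ENNReal.ofReal ((Sum.elim P R (e i)).side ^ δ) :=
        iInf₂_le _ ⟨fun i => isDyadic (e i), cover⟩
    _ = ∑' s, ENNReal.ofReal ((Sum.elim P R s).side ^ δ) :=
        e.tsum_eq fun s => ENNReal.ofReal ((Sum.elim P R s).side ^ δ)
    _ = ∑' i, ENNReal.ofReal ((P i).side ^ δ) + ∑' j, ENNReal.ofReal ((R j).side ^ δ) :=
        Summable.tsum_sum ENNReal.summable ENNReal.summable
    _ ≤ ∑' i, ENNReal.ofReal ((P i).side ^ δ) + ε := by gcongr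

theorem exists_isDyadic_covers_of_tsum_dContent_lt {ι : Type*} [Countable ι]
    {E : ι → Set (Fin n → ℝ)} {S : ℝ≥0∞} (hS : ∑' i, dContent n δ (E i) < S) :
    ∃ P : ι → ℕ → Cube n, (∀ i j, (P i j).IsDyadic) ∧ (∀ i, E i ⊆ ⋃ j, (P i j).toSet) ∧
      ∑' p : ι × ℕ, ENNReal.ofReal ((P p.1 p.2).side ^ δ) ≤ S := by
  obtain ⟨e, he, hsum⟩ := ENNReal.exists_pos_sum_of_countable' (tsub_pos_of_lt hS).ne' ι
  have exists_cover (i : ι) : ∃ P : ℕ → Cube n, ((∀ j, (P j).IsDyadic) ∧ E i ⊆ ⋃ j, (P j).toSet) ∧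
      ∑' j, ENNReal.ofReal ((P j).side ^ δ) < dContent n δ (E i) + e i := by
    have hlt : dContent n δ (E i) < dContent n δ (E i) + e i :=
      ENNReal.lt_add_right (ENNReal.ne_top_of_tsum_ne_top hS.ne_top i) (he i).ne'
    simpa only [dContent, iInf_lt_iff, exists_prop] using hlt
  choose P hP hlt using exists_cover
  refine ⟨P, fun i => (hP i).1, fun i => (hP i).2, ?_⟩
  calc ∑' p : ι × ℕ, ENNReal.ofReal ((P p.1 p.2).side ^ δ)
      = ∑' i, ∑' j, ENNReal.ofReal ((P i j).side ^ δ) := ENNReal.tsum_prod'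
    _ ≤ ∑' i, (dContent n δ (E i) + e i) := ENNReal.tsum_le_tsum fun i => (hlt i).le
    _ ≤ ∑' i, dContent n δ (E i) + (S - ∑' i, dContent n δ (E i)) := by
        rw [ENNReal.tsum_add]
        gcongr
    _ = S := add_tsub_cancel_of_le hS.le

theorem dContent_mono (n : ℕ) (δ : ℝ) : Monotone (dContent n δ) :=
  fun _ _ h => le_iInf₂ fun P hP => iInf₂_le P ⟨hP.1, h.trans hP.2⟩

/-- The dyadic Hausdorff content as an outer measure, which gives access to the subadditivity lemmas
for outer measures. -/
def dyadicOuterMeasure (n : ℕ) (hδ : 0 < δ) : OuterMeasure (Fin n → ℝ) where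
  measureOf := dContent n δ
  empty := le_bot_iff.1 <| by
    simpa using dContent_le_tsum hδ (P := (Empty.elim : Empty → Cube n)) nofun (empty_subset _)
  mono h := dContent_mono n δ h
  iUnion_nat E _ := le_of_forall_gt_imp_ge_of_dense fun S hS => by
    obtain ⟨P, hP, hE, hsum⟩ := exists_isDyadic_covers_of_tsum_dContent_lt hS
    refine (dContent_le_tsum hδ (P := fun p : ℕ × ℕ => P p.1 p.2) (fun p => hP _ _) ?_).trans hsum
    rw [iUnion_prod']
    exact iUnion_mono hE

theorem dContent_iUnion_le {ι : Type*} [Countable ι] (hδ : 0 < δ) (E : ι → Set (Fin n → ℝ)) :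
    dContent n δ (⋃ i, E i) ≤ ∑' i, dContent n δ (E i) :=
  measure_iUnion_le (μ := dyadicOuterMeasure n hδ) E

theorem dContent_union_le (hδ : 0 < δ) (E F : Set (Fin n → ℝ)) :
    dContent n δ (E ∪ F) ≤ dContent n δ E + dContent n δ F :=
  measure_union_le (μ := dyadicOuterMeasure n hδ) E F

theorem Cube.IsDyadic.dContent_le (hδ : 0 < δ) {Q : Cube n} (hQ : Q.IsDyadic) :
    dContent n δ Q.toSet ≤ ENNReal.ofReal (Q.side ^ δ) := by
  simpa using dContent_le_tsum hδ (P := fun _ : Unit => Q) (fun _ => hQ) (subset_iUnion _ ())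

/-- A constant `K` such that every cube has dyadic content at most `K * ℓ(Q) ^ δ`: `2 ^ n` dyadic
cubes of side at most `2 * ℓ(Q)` cover `Q`. -/
def dyadicCoverConst (n : ℕ) (δ : ℝ) : ℝ≥0∞ := 2 ^ n * ENNReal.ofReal (2 ^ δ)

theorem dyadicCoverConst_ne_zero : dyadicCoverConst n δ ≠ 0 := by
  have : (0 : ℝ) < 2 ^ δ := by positivity
  simpa [dyadicCoverConst]

theorem dyadicCoverConst_ne_top : dyadicCoverConst n δ ≠ ⊤ :=
  ENNReal.mul_ne_top (by simp) ENNReal.ofReal_ne_top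

theorem Cube.dContent_le (hδ : 0 < δ) (Q : Cube n) :
    dContent n δ Q.toSet ≤ dyadicCoverConst n δ * ENNReal.ofReal (Q.side ^ δ) := by
  obtain ⟨k, hlt, hle⟩ := exists_mem_Ioc_zpow Q.side_pos (one_lt_two : (1 : ℝ) < 2)
  have two_zpow_le : (2 : ℝ) ^ (k + 1) ≤ 2 * Q.side := by
    rw [zpow_add_one₀ two_ne_zero]
    linarith
  let I := Finset.Icc (fun i => ⌊Q.corner i / 2 ^ (k + 1)⌋)
    (fun i => ⌊Q.corner i / 2 ^ (k + 1)⌋ + 1)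
  have card_I : I.card = 2 ^ n := by simp [I, Pi.card_Icc, add_assoc]
  calc dContent n δ Q.toSet
      ≤ dContent n δ (⋃ z ∈ I, (Cube.dyadic (k + 1) z).toSet) :=
        dContent_mono n δ (Q.toSet_subset_biUnion_dyadic hle)
    _ ≤ ∑ z ∈ I, dContent n δ (Cube.dyadic (k + 1) z).toSet :=
        measure_biUnion_finset_le (μ := dyadicOuterMeasure n hδ) I _
    _ ≤ ∑ z ∈ I, ENNReal.ofReal ((2 * Q.side) ^ δ) :=
        Finset.sum_le_sum fun z _ => ((Cube.isDyadic_dyadic _ _).dContent_le hδ).trans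
          (ENNReal.ofReal_le_ofReal (Real.rpow_le_rpow (Cube.side_pos _).le two_zpow_le hδ.le))
    _ = dyadicCoverConst n δ * ENNReal.ofReal (Q.side ^ δ) := by
        rw [Finset.sum_const, card_I, nsmul_eq_mul, Real.mul_rpow two_pos.le Q.side_pos.le,
          ENNReal.ofReal_mul (by positivity), dyadicCoverConst, mul_assoc]
        norm_cast

theorem Cube.le_dContent (hδ₀ : 0 ≤ δ) (hδn : δ ≤ n) (Q : Cube n) :
    ENNReal.ofReal (Q.side ^ δ) ≤ dContent n δ Q.toSet :=
  le_iInf₂ fun _ hP => Q.ofReal_side_rpow_le_tsum hδ₀ hδn hP.2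

theorem dContent_le_mul_hContent (hδ : 0 < δ) (E : Set (Fin n → ℝ)) :
    dContent n δ E ≤ dyadicCoverConst n δ * hContent n δ E := by
  simp only [hContent, ENNReal.mul_iInf_of_ne dyadicCoverConst_ne_zero dyadicCoverConst_ne_top]
  refine le_iInf₂ fun P hE => ?_
  calc dContent n δ E ≤ ∑' i, dContent n δ (P i).toSet :=
        (dContent_mono n δ hE).trans (dContent_iUnion_le hδ _)
    _ ≤ ∑' i, dyadicCoverConst n δ * ENNReal.ofReal ((P i).side ^ δ) :=
        ENNReal.tsum_le_tsum fun i => (P i).dContent_le hδ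
    _ = dyadicCoverConst n δ * ∑' i, ENNReal.ofReal ((P i).side ^ δ) := ENNReal.tsum_mul_left

theorem dContent_closedBall_le (hδ : 0 < δ) (x : Fin n → ℝ) {r : ℝ} (hr : 0 < r) :
    dContent n δ (closedBall x r) ≤ dyadicCoverConst n δ * ENNReal.ofReal ((3 * r) ^ δ) := by
  let Q : Cube n := ⟨fun i => x i - r, 3 * r, by positivity⟩
  have subset : closedBall x r ⊆ Q.toSet := fun y hy i => by
    have hi := abs_le.1 ((dist_le_pi_dist y x i).trans (mem_closedBall.1 hy))
    constructor <;> simp only [Q] <;> linarith [hi.1, hi.2]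
  exact (dContent_mono n δ subset).trans (Q.dContent_le hδ)

theorem QuasiCont.exists_dContent_le {f : (Fin n → ℝ) → ℝ} (hf : QuasiCont n δ f) (hδ : 0 < δ)
    {η : ℝ≥0∞} (hη : η ≠ 0) : ∃ O, dContent n δ O ≤ η ∧ ContinuousOn f Oᶜ := by
  have hdiv : 0 < η / dyadicCoverConst n δ := ENNReal.div_pos hη dyadicCoverConst_ne_top
  obtain ⟨ε, hε, hlt⟩ := ENNReal.lt_iff_exists_nnreal_btwn.1 hdiv
  obtain ⟨O, -, hO, hcont⟩ := hf ε (by exact_mod_cast hε)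
  refine ⟨O, (dContent_le_mul_hContent hδ O).trans ?_, hcont⟩
  rw [mul_comm]
  refine ENNReal.mul_le_of_le_div (hO.le.trans ?_)
  simpa using hlt.le

end DyadicContent

section MaximalInequality

variable {n : ℕ} {δ : ℝ} {κ : ℝ≥0∞}

theorem lt_toReal_div_rpow_inv_of_mul_ofReal_rpow_lt (hδ : 0 < δ) {r : ℝ} {c M : ℝ≥0∞} (hr : 0 ≤ r)
    (hc₀ : c ≠ 0) (hc : c ≠ ⊤) (hM : M ≠ ⊤) (h : c * ENNReal.ofReal (r ^ δ) < M) :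
    r < (M / c).toReal ^ δ⁻¹ := by
  rw [mul_comm, ← ENNReal.lt_div_iff_mul_lt (.inl hc₀) (.inl hc),
    ENNReal.ofReal_lt_iff_lt_toReal (by positivity) (ENNReal.div_ne_top hM hc₀)] at h
  exact (Real.lt_rpow_inv_iff_of_pos hr ENNReal.toReal_nonneg hδ).2 h

theorem dContent_closedBall_mul_le (hδ : 0 < δ) {s r : ℝ} (hs : 0 < s) (hr : 0 < r) {c M : ℝ≥0∞}
    (hc₀ : c ≠ 0) (hc : c ≠ ⊤) (hM : c * ENNReal.ofReal (r ^ δ) ≤ M) {x : Fin n → ℝ} :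
    dContent n δ (closedBall x (s * r)) ≤
      dyadicCoverConst n δ * ENNReal.ofReal ((3 * s) ^ δ) / c * M :=
  calc dContent n δ (closedBall x (s * r))
      ≤ dyadicCoverConst n δ * ENNReal.ofReal ((3 * (s * r)) ^ δ) :=
        dContent_closedBall_le hδ x (by positivity)
    _ = dyadicCoverConst n δ * ENNReal.ofReal ((3 * s) ^ δ) / c * (c * ENNReal.ofReal (r ^ δ)) := by
        rw [← mul_assoc 3, Real.mul_rpow (by positivity) hr.le, ENNReal.ofReal_mul (by positivity),
          ← mul_assoc, ← mul_assoc, ENNReal.div_mul_cancel hc₀ hc]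
    _ ≤ dyadicCoverConst n δ * ENNReal.ofReal ((3 * s) ^ δ) / c * M := by gcongr

theorem dContent_setOfPred_lt_measure_closedBall_le (hδ : 0 < δ) {a : ℝ} (ha : 0 < a) {c : ℝ≥0∞}
    (hc₀ : c ≠ 0) (hc : c ≠ ⊤) (ν : Measure (Fin n → ℝ)) :
    dContent n δ {x | ∃ r, 0 < r ∧ c * ENNReal.ofReal (r ^ δ) < ν (closedBall x (a * r))} ≤
      dyadicCoverConst n δ * ENNReal.ofReal ((15 * a) ^ δ) / c * ν univ := by
  rcases eq_or_ne (ν univ) ⊤ with hν | hν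
  · have rpow_pos : (0 : ℝ) < (15 * a) ^ δ := by positivity
    rw [hν, ENNReal.mul_top]
    · exact le_top
    · exact (ENNReal.div_pos (mul_ne_zero dyadicCoverConst_ne_zero (by simpa)) hc).ne'
  let t : Set ((Fin n → ℝ) × ℝ) :=
    {p | 0 < p.2 ∧ c * ENNReal.ofReal (p.2 ^ δ) < ν (closedBall p.1 (a * p.2))}
  have radius_le (p) (hp : p ∈ t) : a * p.2 ≤ a * (ν univ / c).toReal ^ δ⁻¹ := by
    have radius_lt := lt_toReal_div_rpow_inv_of_mul_ofReal_rpow_lt hδ hp.1.le hc₀ hc hν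
      (hp.2.trans_le (measure_mono (subset_univ _)))
    gcongr
  obtain ⟨u, hut, hdisj, hcov⟩ :=
    Vitali.exists_disjoint_subfamily_covering_enlargement_closedBall t (fun p => p.1)
      (fun p => a * p.2) _ radius_le 5 (by norm_num)
  have countable : u.Countable := hdisj.countable_of_nonempty_interior fun p hp =>
    ⟨p.1, ball_subset_interior_closedBall (mem_ball_self (mul_pos ha (hut hp).1))⟩
  have : Countable u := countable.to_subtype
  have subset : {x | ∃ r, 0 < r ∧ c * ENNReal.ofReal (r ^ δ) < ν (closedBall x (a * r))} ⊆
      ⋃ p : u, closedBall p.1.1 (5 * a * p.1.2) := by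
    rintro x ⟨r, hr, hlt⟩
    obtain ⟨p, hp, hsub⟩ := hcov (x, r) ⟨hr, hlt⟩
    refine mem_iUnion.2 ⟨⟨p, hp⟩, ?_⟩
    simpa only [mul_assoc] using hsub (mem_closedBall_self (by positivity))
  calc _ ≤ ∑' p : u, dContent n δ (closedBall p.1.1 (5 * a * p.1.2)) :=
        (dContent_mono n δ subset).trans (dContent_iUnion_le hδ _)
    _ ≤ ∑' p : u, dyadicCoverConst n δ * ENNReal.ofReal ((3 * (5 * a)) ^ δ) / c *
          ν (closedBall p.1.1 (a * p.1.2)) :=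
        ENNReal.tsum_le_tsum fun p => dContent_closedBall_mul_le hδ (by positivity) (hut p.2).1
          hc₀ hc (hut p.2).2.le
    _ = dyadicCoverConst n δ * ENNReal.ofReal ((3 * (5 * a)) ^ δ) / c *
          ν (⋃ p ∈ u, closedBall p.1 (a * p.2)) := by
        rw [ENNReal.tsum_mul_left,
          measure_biUnion countable hdisj fun _ _ => measurableSet_closedBall]
    _ ≤ dyadicCoverConst n δ * ENNReal.ofReal ((15 * a) ^ δ) / c * ν univ := by
        rw [← mul_assoc 3, show (3 : ℝ) * 5 = 15 by norm_num]
        gcongr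
        exact subset_univ _

/-- The measure carrying a point mass `ℓ(P) ^ δ` at the corner of each cube `P` of a family. -/
def cornerMeasure {ι : Type*} (δ : ℝ) (P : ι → Cube n) : Measure (Fin n → ℝ) :=
  .sum fun i => ENNReal.ofReal ((P i).side ^ δ) • .dirac (P i).corner

theorem cornerMeasure_univ {ι : Type*} (P : ι → Cube n) :
    cornerMeasure δ P univ = ∑' i, ENNReal.ofReal ((P i).side ^ δ) := by
  simp [cornerMeasure]

theorem tsum_dContent_inter_le_cornerMeasure_closedBall {ι : Type*} (hδ : 0 < δ) {P : ι → Cube n}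
    (hP : ∀ i, (P i).IsDyadic) {x : Fin n → ℝ}
    (hx : ∀ i, x ∉ closedBall (P i).corner (2 * (P i).side)) {Q : Cube n} (hxQ : x ∈ Q.toSet) :
    ∑' i, dContent n δ (Q.toSet ∩ (P i).toSet) ≤
      cornerMeasure δ P (closedBall x (2 * Q.side)) := by
  rw [cornerMeasure, Measure.sum_apply _ measurableSet_closedBall]
  refine ENNReal.tsum_le_tsum fun i => ?_
  rcases (Q.toSet ∩ (P i).toSet).eq_empty_or_nonempty with hempty | ⟨y, hyQ, hyP⟩
  · rw [hempty]
    exact (measure_empty (μ := dyadicOuterMeasure n hδ)).trans_le zero_le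
  have corner_mem : (P i).corner ∈ closedBall x (2 * Q.side) := by
    have dist_xy := Q.dist_le_side hxQ hyQ
    have dist_y_corner := (P i).dist_le_side hyP (P i).corner_mem_toSet
    have triangle := dist_triangle x y (P i).corner
    have far := not_le.1 (mt mem_closedBall.2 (hx i))
    rw [mem_closedBall']
    linarith
  simpa [corner_mem] using
    (dContent_mono n δ inter_subset_right).trans ((hP i).dContent_le hδ)

/-- The set where the fractional maximal function `x ↦ sup {m(Q) / ℓ(Q) ^ δ : Q ∋ x}` of a set
function `m` exceeds `κ`. -/
def maximalSuperlevel (δ : ℝ) (m : Set (Fin n → ℝ) → ℝ≥0∞) (κ : ℝ≥0∞) : Set (Fin n → ℝ) :=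
  {x | ∃ Q : Cube n, x ∈ Q.toSet ∧ κ * ENNReal.ofReal (Q.side ^ δ) < m Q.toSet}

theorem maximalSuperlevel_mono {m m' : Set (Fin n → ℝ) → ℝ≥0∞} (h : ∀ A, m A ≤ m' A) (κ : ℝ≥0∞) :
    maximalSuperlevel δ m κ ⊆ maximalSuperlevel δ m' κ :=
  fun _ ⟨Q, hx, hlt⟩ => ⟨Q, hx, hlt.trans_le (h _)⟩

/-- The constant of the weak type maximal inequality at level `κ`. The first term comes from the
dilated cubes of the cover, the second one from the Vitali covering lemma. -/
def maximalConst (n : ℕ) (δ : ℝ) (κ : ℝ≥0∞) : ℝ≥0∞ :=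
  dyadicCoverConst n δ * ENNReal.ofReal (6 ^ δ) +
    dyadicCoverConst n δ * ENNReal.ofReal (30 ^ δ) / κ

theorem maximalConst_ne_zero : maximalConst n δ κ ≠ 0 := by
  have : (0 : ℝ) < 6 ^ δ := by positivity
  simp [maximalConst, dyadicCoverConst_ne_zero, this]

theorem maximalConst_ne_top (hκ : κ ≠ 0) : maximalConst n δ κ ≠ ⊤ := by
  simp [maximalConst, ENNReal.mul_eq_top, ENNReal.div_eq_top, dyadicCoverConst_ne_top, hκ]

theorem dContent_maximalSuperlevel_isDyadic_le {ι : Type*} [Countable ι] (hδ : 0 < δ) (hκ₀ : κ ≠ 0)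
    (hκ : κ ≠ ⊤) {P : ι → Cube n} (hP : ∀ i, (P i).IsDyadic) :
    dContent n δ (maximalSuperlevel δ (fun A => ∑' i, dContent n δ (A ∩ (P i).toSet)) κ) ≤
      maximalConst n δ κ * ∑' i, ENNReal.ofReal ((P i).side ^ δ) := by
  let near := ⋃ i, closedBall (P i).corner (2 * (P i).side)
  let heavy := {x | ∃ r, 0 < r ∧
    κ * ENNReal.ofReal (r ^ δ) < cornerMeasure δ P (closedBall x (2 * r))}
  have subset : maximalSuperlevel δ (fun A => ∑' i, dContent n δ (A ∩ (P i).toSet)) κ ⊆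
      near ∪ heavy := by
    rintro x ⟨Q, hxQ, hlt⟩
    refine or_iff_not_imp_left.2 fun hx => ⟨Q.side, Q.side_pos, hlt.trans_le ?_⟩
    exact tsum_dContent_inter_le_cornerMeasure_closedBall hδ hP (by simpa [near] using hx) hxQ
  have near_le : dContent n δ near ≤ dyadicCoverConst n δ * ENNReal.ofReal (6 ^ δ) *
      ∑' i, ENNReal.ofReal ((P i).side ^ δ) := by
    rw [← ENNReal.tsum_mul_left]
    refine (dContent_iUnion_le hδ _).trans (ENNReal.tsum_le_tsum fun i => ?_)
    have side_pos := (P i).side_pos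
    convert dContent_closedBall_le hδ (P i).corner (r := 2 * (P i).side) (by positivity) using 1
    rw [mul_assoc, ← ENNReal.ofReal_mul (by positivity),
      ← Real.mul_rpow (by norm_num) side_pos.le, ← mul_assoc 3]
    norm_num
  have heavy_le : dContent n δ heavy ≤ dyadicCoverConst n δ * ENNReal.ofReal (30 ^ δ) / κ *
      ∑' i, ENNReal.ofReal ((P i).side ^ δ) := by
    convert dContent_setOfPred_lt_measure_closedBall_le hδ two_pos hκ₀ hκ
      (cornerMeasure δ P) using 4
    · norm_num
    · exact (cornerMeasure_univ P).symm
  calc _ ≤ dContent n δ near + dContent n δ heavy :=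
        (dContent_mono n δ subset).trans (dContent_union_le hδ _ _)
    _ ≤ _ := by
        rw [maximalConst, add_mul]
        exact add_le_add near_le heavy_le

theorem dContent_maximalSuperlevel_tsum_le {ι : Type*} [Countable ι] (hδ : 0 < δ) (hκ₀ : κ ≠ 0)
    (hκ : κ ≠ ⊤) (E : ι → Set (Fin n → ℝ)) :
    dContent n δ (maximalSuperlevel δ (fun A => ∑' i, dContent n δ (A ∩ E i)) κ) ≤
      maximalConst n δ κ * ∑' i, dContent n δ (E i) := by
  refine ENNReal.le_mul_of_forall_lt (.inl maximalConst_ne_zero) (.inl (maximalConst_ne_top hκ₀))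
    fun C hC S hS => ?_
  obtain ⟨P, hP, hcover, hsum⟩ := exists_isDyadic_covers_of_tsum_dContent_lt hS
  have tsum_inter_le (A : Set (Fin n → ℝ)) : ∑' i, dContent n δ (A ∩ E i) ≤
      ∑' p : ι × ℕ, dContent n δ (A ∩ (P p.1 p.2).toSet) := by
    rw [ENNReal.tsum_prod']
    refine ENNReal.tsum_le_tsum fun i => ?_
    calc dContent n δ (A ∩ E i) ≤ dContent n δ (⋃ j, A ∩ (P i j).toSet) :=
          dContent_mono n δ (by grw [hcover i, inter_iUnion])
      _ ≤ ∑' j, dContent n δ (A ∩ (P i j).toSet) := dContent_iUnion_le hδ _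
  calc _ ≤ dContent n δ (maximalSuperlevel δ
            (fun A => ∑' p : ι × ℕ, dContent n δ (A ∩ (P p.1 p.2).toSet)) κ) :=
        dContent_mono n δ (maximalSuperlevel_mono tsum_inter_le κ)
    _ ≤ maximalConst n δ κ * ∑' p : ι × ℕ, ENNReal.ofReal ((P p.1 p.2).side ^ δ) :=
        dContent_maximalSuperlevel_isDyadic_le hδ hκ₀ hκ fun p => hP p.1 p.2
    _ ≤ C * S := by gcongr

theorem dContent_maximalSuperlevel_choquet_le (hδ : 0 < δ) (hκ₀ : κ ≠ 0) (hκ : κ ≠ ⊤)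
    (f : (Fin n → ℝ) → ℝ) (O : Set (Fin n → ℝ)) :
    dContent n δ
        (maximalSuperlevel δ (fun A => dContent n δ (A ∩ O) + integD n δ f (A ∩ O)) κ) ≤
      maximalConst n δ κ * (2 * dContent n δ O + integD n δ f O) := by
  let E : ℕ → Set (Fin n → ℝ)
    | 0 => O
    | k + 1 => {x | x ∈ O ∧ k < f x}
  have le_tsum (A : Set (Fin n → ℝ)) :
      dContent n δ (A ∩ O) + integD n δ f (A ∩ O) ≤ ∑' k, dContent n δ (A ∩ E k) := by
    rw [tsum_eq_zero_add' ENNReal.summable]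
    refine add_le_add_right ((choquet_le_tsum (dContent_mono n δ) f (A ∩ O)).trans_eq ?_) _
    simp only [E, ofPred_and, ofPred_mem_eq, inter_assoc]
  have tsum_le : ∑' k, dContent n δ (E k) ≤ 2 * dContent n δ O + integD n δ f O := by
    rw [tsum_eq_zero_add' ENNReal.summable, two_mul, add_assoc]
    exact add_le_add_right (tsum_le_add_choquet (dContent_mono n δ) f O) _
  calc _ ≤ dContent n δ (maximalSuperlevel δ (fun A => ∑' k, dContent n δ (A ∩ E k)) κ) :=
        dContent_mono n δ (maximalSuperlevel_mono le_tsum κ)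
    _ ≤ maximalConst n δ κ * ∑' k, dContent n δ (E k) :=
        dContent_maximalSuperlevel_tsum_le hδ hκ₀ hκ E
    _ ≤ _ := by gcongr

theorem QuasiCont.exists_dContent_union_maximalSuperlevel_le {f : (Fin n → ℝ) → ℝ}
    (hf : QuasiCont n δ f) (hint : integD n δ f univ ≠ ⊤) (hδ : 0 < δ) (hκ₀ : κ ≠ 0) (hκ : κ ≠ ⊤)
    {θ : ℝ≥0∞} (hθ : θ ≠ 0) :
    ∃ O, ContinuousOn f Oᶜ ∧ dContent n δ (O ∪ maximalSuperlevel δ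
      (fun A => dContent n δ (A ∩ O) + integD n δ f (A ∩ O)) κ) ≤ θ := by
  let C := maximalConst n δ κ
  let D := 1 + C * (2 + 1)
  have hD₀ : D ≠ 0 := by simp [D]
  have hD : D ≠ ⊤ := by simp [D, C, ENNReal.mul_eq_top, maximalConst_ne_top hκ₀]
  have hs : θ / D ≠ 0 := (ENNReal.div_pos hθ hD).ne'
  obtain ⟨η, hη, hsmall⟩ := exists_pos_choquet_le_of_le (dContent_mono n δ) hint hs
  obtain ⟨O, hO, hcont⟩ := hf.exists_dContent_le hδ (η := min η (θ / D))
    (lt_min hη (pos_iff_ne_zero.2 hs)).ne'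
  have hOη := hO.trans (min_le_left _ _)
  have hOs := hO.trans (min_le_right _ _)
  refine ⟨O, hcont, ?_⟩
  calc _ ≤ dContent n δ O + C * (2 * dContent n δ O + integD n δ f O) :=
        (dContent_union_le hδ _ _).trans
          (add_le_add_right (dContent_maximalSuperlevel_choquet_le hδ hκ₀ hκ f O) _)
    _ ≤ θ / D + C * (2 * (θ / D) + θ / D) := by
        gcongr
        exact hsmall O hOη
    _ = D * (θ / D) := by ring
    _ = θ := ENNReal.mul_div_cancel hD₀ hD

end MaximalInequality

section Differentiation

variable {n : ℕ} {δ : ℝ} {f : (Fin n → ℝ) → ℝ} {x : Fin n → ℝ}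

/-- The filter on cubes describing `Q → x`: the cubes contain `x` and their sides tend to `0`. -/
def shrinkingTo (x : Fin n → ℝ) : Filter (Cube n) :=
  comap Cube.side (𝓝 0) ⊓ 𝓟 {Q | x ∈ Q.toSet}

theorem eventually_shrinkingTo {p : Cube n → Prop} :
    (∀ᶠ Q in shrinkingTo x, p Q) ↔ ∃ r, 0 < r ∧ ∀ Q : Cube n, x ∈ Q.toSet → Q.side < r → p Q := by
  rw [shrinkingTo, ((nhds_basis_ball.comap _).inf_principal _).eventually_iff]
  refine exists_congr fun r => and_congr_right fun _ => forall_congr' fun Q => ?_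
  have side_abs : |Q.side| = Q.side := abs_of_pos Q.side_pos
  simp only [mem_inter_iff, mem_preimage, mem_ball_zero_iff, Real.norm_eq_abs, side_abs,
    mem_ofPred_eq, and_imp]
  exact forall_comm

/-- The average of `f` over `Q` with respect to the dyadic content. -/
def dAverage (n : ℕ) (δ : ℝ) (f : (Fin n → ℝ) → ℝ) (Q : Cube n) : ℝ :=
  (integD n δ f Q.toSet / dContent n δ Q.toSet).toReal

theorem eventually_shrinkingTo_forall_abs_sub_le {O : Set (Fin n → ℝ)}
    (hf : ContinuousOn f Oᶜ) (hx : x ∉ O) {ε : ℝ} (hε : 0 < ε) :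
    ∀ᶠ Q in shrinkingTo x, ∀ y ∈ Q.toSet \ O, |f y - f x| ≤ ε := by
  obtain ⟨r, hr, close⟩ := continuousOn_iff.1 hf x hx ε hε
  exact eventually_shrinkingTo.2 ⟨r, hr, fun Q hxQ hQr y hy =>
    (close y hy.2 ((Q.dist_le_side hy.1 hxQ).trans_lt hQr)).le⟩

theorem eventually_abs_dAverage_sub_le (hδ₀ : 0 < δ) (hδn : δ ≤ n) (hfx : 0 ≤ f x)
    {O : Set (Fin n → ℝ)} (hf : ContinuousOn f Oᶜ) {κ : ℝ} (hκ : 0 < κ)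
    (hx : x ∉ O ∪ maximalSuperlevel δ (fun A => dContent n δ (A ∩ O) + integD n δ f (A ∩ O))
      (ENNReal.ofReal κ)) :
    ∀ᶠ Q in shrinkingTo x, |dAverage n δ f Q - f x| ≤ κ + κ + f x * κ := by
  obtain ⟨hxO, hx_max⟩ := not_or.1 hx
  filter_upwards [eventually_shrinkingTo_forall_abs_sub_le hf hxO hκ,
    eventually_shrinkingTo.2 ⟨1, one_pos, fun Q hxQ _ => hxQ⟩] with Q close hxQ
  have side_pos : 0 < Q.side ^ δ := Real.rpow_pos_of_pos Q.side_pos δ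
  have lower := Q.le_dContent hδ₀.le hδn
  refine abs_choquet_div_sub_le (dContent_mono n δ) (dContent_union_le hδ₀)
    ((ENNReal.ofReal_pos.2 side_pos).trans_le lower).ne' ?_ hfx hκ.le hκ.le close ?_
  · exact ne_top_of_le_ne_top (ENNReal.mul_ne_top dyadicCoverConst_ne_top ENNReal.ofReal_ne_top)
      (Q.dContent_le hδ₀)
  · calc dContent n δ (Q.toSet ∩ O) + integD n δ f (Q.toSet ∩ O)
        ≤ ENNReal.ofReal κ * ENNReal.ofReal (Q.side ^ δ) :=
          not_lt.1 fun hlt => hx_max ⟨Q, hxQ, hlt⟩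
      _ ≤ ENNReal.ofReal κ * dContent n δ Q.toSet := by gcongr

theorem dContent_setOfPred_not_eventually_abs_dAverage_sub_le (hδ₀ : 0 < δ) (hδn : δ ≤ n)
    (hf₀ : 0 ≤ f) (hf : QuasiCont n δ f) (hint : integD n δ f univ ≠ ⊤) {κ : ℝ} (hκ : 0 < κ) :
    dContent n δ {x | ¬∀ᶠ Q in shrinkingTo x, |dAverage n δ f Q - f x| ≤ κ + κ + f x * κ} = 0 := by
  refine le_bot_iff.1 (le_of_forall_gt_imp_ge_of_dense fun θ hθ => ?_)
  obtain ⟨O, hcont, hle⟩ := hf.exists_dContent_union_maximalSuperlevel_le hint hδ₀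
    (ENNReal.ofReal_pos.2 hκ).ne' ENNReal.ofReal_ne_top hθ.ne'
  refine le_trans (dContent_mono n δ fun x => ?_) hle
  contrapose
  exact fun hx => not_not.2 (eventually_abs_dAverage_sub_le hδ₀ hδn (hf₀ x) hcont hκ hx)

theorem dContent_setOfPred_not_tendsto_dAverage (hδ₀ : 0 < δ) (hδn : δ ≤ n) (hf₀ : 0 ≤ f)
    (hf : QuasiCont n δ f) (hint : integD n δ f univ ≠ ⊤) :
    dContent n δ {x | ¬Tendsto (dAverage n δ f) (shrinkingTo x) (𝓝 (f x))} = 0 := by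
  let bad (k : ℕ) := {x | ¬∀ᶠ Q in shrinkingTo x,
    |dAverage n δ f Q - f x| ≤ 1 / (k + 1 : ℝ) + 1 / (k + 1 : ℝ) + f x * (1 / (k + 1 : ℝ))}
  have subset : {x | ¬Tendsto (dAverage n δ f) (shrinkingTo x) (𝓝 (f x))} ⊆ ⋃ k, bad k := by
    intro x
    contrapose
    intro hx
    simp only [bad, mem_iUnion, mem_ofPred_eq, not_exists, not_not] at hx
    refine not_not.2 (Metric.tendsto_nhds.2 fun ε hε => ?_)
    have hfx : 0 ≤ f x := hf₀ x
    have factor_pos : 0 < 2 + f x := by positivity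
    obtain ⟨k, hk⟩ := exists_nat_one_div_lt (div_pos hε factor_pos)
    rw [lt_div_iff₀ factor_pos] at hk
    filter_upwards [hx k] with Q hQ
    rw [Real.dist_eq]
    linarith
  have bad_null (k : ℕ) : dContent n δ (bad k) = 0 :=
    dContent_setOfPred_not_eventually_abs_dAverage_sub_le hδ₀ hδn hf₀ hf hint (by positivity)
  exact measure_mono_null (μ := dyadicOuterMeasure n hδ₀) subset (measure_iUnion_null bad_null)

end Differentiation

/-- Lebesgue differentiation for the dyadic Hausdorff content. -/
theorem stmt16 (n : ℕ) (hn : 1 ≤ n) (δ : ℝ) (hδ0 : 0 < δ) (hδn : δ ≤ n)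
    (f : (Fin n → ℝ) → ℝ) (hf0 : ∀ x, 0 ≤ f x) (hfqc : QuasiCont n δ f)
    (hfint : integD n δ f Set.univ < ⊤) :
    ∃ N : Set (Fin n → ℝ), dContent n δ N = 0 ∧
      ∀ x ∉ N, ∀ ε : ℝ, 0 < ε → ∃ r : ℝ, 0 < r ∧
        ∀ Q : Cube n, x ∈ Q.toSet → Q.side < r →
          |(integD n δ f Q.toSet / dContent n δ Q.toSet).toReal - f x| < ε := by
  refine ⟨_, dContent_setOfPred_not_tendsto_dAverage hδ0 hδn hf0 hfqc hfint.ne, fun x hx ε hε => ?_⟩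
  exact eventually_shrinkingTo.1 (Metric.tendsto_nhds.1 (not_not.1 hx) ε hε)
end
end
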